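/- Let Γ be a finite simple graph, let G = G(Γ) be the associated right-angled Artin group, and let N be a finitely generated full normal subgroup of G. Then the outer automorphism group Out(N), i.e., the quotient of the automorphism group Aut(N) by the normal subgroup Inn(N) of inner automorphisms, is residually finite. -/

import Mathlib

/-- The defining relators of a right-angled Artin group: commutators of generators
corresponding to adjacent vertices. -/
def raagRels {V : Type} (Γ : SimpleGraph V) : Set (FreeGroup V) :=
  { r | ∃ v w : V, Γ.Adj v w ∧
      r = FreeGroup.of v * FreeGroup.of w * (FreeGroup.of v)⁻¹ * (FreeGroup.of w)⁻¹ }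

/-- The right-angled Artin group associated to the simple graph `Γ`. -/
abbrev RAAG {V : Type} (Γ : SimpleGraph V) : Type := PresentedGroup (raagRels Γ)

/-- The subgroup `G(Δ)` of the RAAG generated by the vertices in the set `S`. -/
def raagVertexSubgroup {V : Type} (Γ : SimpleGraph V) (S : Set V) : Subgroup (RAAG Γ) :=
  Subgroup.closure { x | ∃ v ∈ S, x = PresentedGroup.of (rels := raagRels Γ) v }

/-- A set of vertices `S` is a join of two (nonempty) subgraphs if it can be split into
two nonempty pieces every two vertices of which (one from each piece) are adjacent. -/
def IsJoinOfTwo {V : Type} (Γ : SimpleGraph V) (S : Set V) : Prop :=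
  ∃ A B : Set V, A.Nonempty ∧ B.Nonempty ∧ Disjoint A B ∧ A ∪ B = S ∧
    ∀ a ∈ A, ∀ b ∈ B, Γ.Adj a b

/-- `P : Fin k → Set V` is a join decomposition of `Γ` into join-indecomposable pieces. -/
def IsJoinDecomposition {V : Type} (Γ : SimpleGraph V) {k : ℕ} (P : Fin k → Set V) : Prop :=
  (∀ i, (P i).Nonempty) ∧ (∀ v : V, ∃! i, v ∈ P i) ∧
    (∀ i j, i ≠ j → ∀ a ∈ P i, ∀ b ∈ P j, Γ.Adj a b) ∧
    (∀ i, ¬ IsJoinOfTwo Γ (P i))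

/-- A subgroup `N` of the RAAG is full if for a join decomposition of `Γ` into
join-indecomposable pieces `Γ_1, …, Γ_k`, `N` intersects each `G(Γ_i)` nontrivially. -/
def IsFullSubgroup {V : Type} (Γ : SimpleGraph V) (N : Subgroup (RAAG Γ)) : Prop :=
  ∀ (k : ℕ) (P : Fin k → Set V), IsJoinDecomposition Γ P →
    ∀ i, N ⊓ raagVertexSubgroup Γ (P i) ≠ ⊥

/-- A group is abelian-by-finite if it has an abelian normal subgroup of finite index. -/
def AbelianByFinite (Q : Type) [Group Q] : Prop :=
  ∃ A : Subgroup Q, A.Normal ∧ A.FiniteIndex ∧ ∀ x y : A, x * y = y * x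

/-- A group is finite-by-abelian if it has a finite normal subgroup with abelian quotient,
equivalently a finite normal subgroup containing all commutators. -/
def FiniteByAbelian (Q : Type) [Group Q] : Prop :=
  ∃ F : Subgroup Q, F.Normal ∧ Finite F ∧ ∀ x y : Q, x * y * x⁻¹ * y⁻¹ ∈ F

/-- The subgroup `Inn(G)` of inner automorphisms, i.e. the range of the conjugation
homomorphism `G →* Aut(G)`, is a normal subgroup of `Aut(G)`. -/
instance innNormal (G : Type) [Group G] : (MulAut.conj (G := G)).range.Normal := by
  constructor
  rintro - ⟨g, rfl⟩ f
  refine ⟨f g, ?_⟩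
  ext x
  simp [MulAut.conj, mul_assoc]

/-- The outer automorphism group `Out(G) = Aut(G)/Inn(G)`. -/
abbrev OutAut (G : Type) [Group G] : Type :=
  MulAut G ⧸ (MulAut.conj (G := G)).range

/-- A group is residually finite if every nontrivial element survives in some finite
quotient. -/
def ResiduallyFinite (K : Type) [Group K] : Prop :=
  ∀ k : K, k ≠ 1 →
    ∃ (Q : Type) (instQ : Group Q), letI := instQ
      Finite Q ∧ ∃ φ : K →* Q, φ k ≠ 1


namespace RaagAux

open Finsupp

variable {V : Type} {Γ : SimpleGraph V}

/-- generator -/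
abbrev gen (Γ : SimpleGraph V) (v : V) : RAAG Γ := PresentedGroup.of (rels := raagRels Γ) v

theorem gen_comm {v w : V} (h : Γ.Adj v w) : gen Γ v * gen Γ w = gen Γ w * gen Γ v := by
  have : PresentedGroup.mk (raagRels Γ)
      (FreeGroup.of v * FreeGroup.of w * (FreeGroup.of v)⁻¹ * (FreeGroup.of w)⁻¹) = 1 :=
    PresentedGroup.one_of_mem ⟨v, w, h, rfl⟩
  simp only [map_mul, map_inv] at this
  have h2 : gen Γ v * gen Γ w * (gen Γ v)⁻¹ * (gen Γ w)⁻¹ = 1 := this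
  rw [mul_inv_eq_one, mul_inv_eq_iff_eq_mul] at h2
  exact h2

/-- universal property -/
theorem exists_lift {H : Type*} [Group H] (f : V → H)
    (hf : ∀ v w, Γ.Adj v w → f v * f w = f w * f v) :
    ∃ F : RAAG Γ →* H, ∀ v, F (gen Γ v) = f v := by
  refine ⟨PresentedGroup.toGroup (f := f) ?_, fun v => PresentedGroup.toGroup.of _⟩
  rintro r ⟨v, w, h, rfl⟩
  simp [hf v w h]

theorem hom_ext {H : Type*} [Group H] {F F' : RAAG Γ →* H}
    (h : ∀ v, F (gen Γ v) = F' (gen Γ v)) : F = F' := PresentedGroup.ext h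

theorem gen_ind {p : RAAG Γ → Prop} (h1 : p 1) (hg : ∀ v, p (gen Γ v))
    (hm : ∀ a b, p a → p b → p (a * b)) (hi : ∀ a, p a → p a⁻¹) (g : RAAG Γ) : p g := by
  have : g ∈ Subgroup.closure (Set.range (PresentedGroup.of (rels := raagRels Γ))) := by
    rw [PresentedGroup.closure_range_of]; trivial
  induction this using Subgroup.closure_induction with
  | mem x hx => obtain ⟨v, rfl⟩ := hx; exact hg v
  | one => exact h1
  | mul a b _ _ ha hb => exact hm a b ha hb
  | inv a _ ha => exact hi a ha

theorem gen_mem {S : Set V} {v : V} (h : v ∈ S) : gen Γ v ∈ raagVertexSubgroup Γ S :=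
  Subgroup.subset_closure ⟨v, h, rfl⟩

theorem sub_ind {S : Set V} {p : RAAG Γ → Prop} (h1 : p 1) (hg : ∀ v ∈ S, p (gen Γ v))
    (hm : ∀ a b, p a → p b → p (a * b)) (hi : ∀ a, p a → p a⁻¹) {g : RAAG Γ}
    (h : g ∈ raagVertexSubgroup Γ S) : p g := by
  induction h using Subgroup.closure_induction with
  | mem x hx => obtain ⟨v, hv, rfl⟩ := hx; exact hg v hv
  | one => exact h1
  | mul a b _ _ ha hb => exact hm a b ha hb
  | inv a _ ha => exact hi a ha

theorem vs_mono {S T : Set V} (h : S ⊆ T) : raagVertexSubgroup Γ S ≤ raagVertexSubgroup Γ T :=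
  fun _ hg => sub_ind (p := fun g => g ∈ raagVertexSubgroup Γ T) (one_mem _)
    (fun _ hv => gen_mem (h hv)) (fun _ _ => mul_mem) (fun _ => inv_mem) hg

theorem vs_univ (g : RAAG Γ) : g ∈ raagVertexSubgroup Γ Set.univ :=
  gen_ind (one_mem _) (fun _ => gen_mem trivial) (fun _ _ => mul_mem) (fun _ => inv_mem) g

open Classical in
theorem exists_ret (S : Set V) : ∃ F : RAAG Γ →* RAAG Γ,
    ∀ v, F (gen Γ v) = if v ∈ S then gen Γ v else 1 := by
  refine exists_lift (fun v => if v ∈ S then gen Γ v else 1) ?_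
  intro v w h
  by_cases h1 : v ∈ S <;> by_cases h2 : w ∈ S <;> simp [h1, h2, gen_comm h]

/-- The retraction onto `G(S)`. -/
noncomputable def ret (Γ : SimpleGraph V) (S : Set V) : RAAG Γ →* RAAG Γ := (exists_ret S).choose

theorem ret_gen_mem {S : Set V} {v : V} (h : v ∈ S) : ret Γ S (gen Γ v) = gen Γ v := by
  have := (exists_ret (Γ := Γ) S).choose_spec v
  rwa [if_pos h] at this

theorem ret_gen_not {S : Set V} {v : V} (h : v ∉ S) : ret Γ S (gen Γ v) = 1 := by
  have := (exists_ret (Γ := Γ) S).choose_spec v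
  rwa [if_neg h] at this

theorem ret_mem (S : Set V) (g : RAAG Γ) : ret Γ S g ∈ raagVertexSubgroup Γ S := by
  refine gen_ind (p := fun g => ret Γ S g ∈ raagVertexSubgroup Γ S) ?_ ?_ ?_ ?_ g
  · simp
  · intro v
    by_cases h : v ∈ S
    · rw [ret_gen_mem h]; exact gen_mem h
    · rw [ret_gen_not h]; exact one_mem _
  · intro a b ha hb; rw [map_mul]; exact mul_mem ha hb
  · intro a ha; rw [map_inv]; exact inv_mem ha

theorem ret_of_mem {S : Set V} {g : RAAG Γ} (h : g ∈ raagVertexSubgroup Γ S) : ret Γ S g = g := by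
  refine sub_ind (p := fun g => ret Γ S g = g) ?_ ?_ ?_ ?_ h
  · simp
  · intro v hv; exact ret_gen_mem hv
  · intro a b ha hb; rw [map_mul, ha, hb]
  · intro a ha; rw [map_inv, ha]

theorem ret_ret (S T : Set V) (g : RAAG Γ) : ret Γ S (ret Γ T g) = ret Γ (S ∩ T) g := by
  have : (ret Γ S).comp (ret Γ T) = ret Γ (S ∩ T) := by
    apply hom_ext
    intro v
    rw [MonoidHom.comp_apply]
    by_cases hT : v ∈ T
    · rw [ret_gen_mem hT]
      by_cases hS : v ∈ S
      · rw [ret_gen_mem hS, ret_gen_mem (Set.mem_inter hS hT)]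
      · rw [ret_gen_not hS, ret_gen_not (fun h => hS h.1)]
    · rw [ret_gen_not hT, map_one, ret_gen_not (fun h => hT h.2)]
  exact DFunLike.congr_fun this g

theorem ret_empty (g : RAAG Γ) : ret Γ ∅ g = 1 := by
  have : ret Γ ∅ = 1 := by
    apply hom_ext
    intro v
    rw [ret_gen_not (by simp)]; rfl
  rw [this]; rfl

/-- the link of `v` -/
abbrev lk (Γ : SimpleGraph V) (v : V) : Set V := {w | Γ.Adj v w}
/-- the star of `v` -/
abbrev st (Γ : SimpleGraph V) (v : V) : Set V := {w | w = v ∨ Γ.Adj v w}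

theorem lk_comm {v : V} {l : RAAG Γ} (h : l ∈ raagVertexSubgroup Γ (lk Γ v)) :
    Commute (gen Γ v) l := by
  refine sub_ind (p := fun l => Commute (gen Γ v) l) ?_ ?_ ?_ ?_ h
  · exact Commute.one_right _
  · intro w hw; exact gen_comm hw
  · intro a b ha hb; exact ha.mul_right hb
  · intro a ha; exact ha.inv_right

theorem lk_le_st (v : V) : raagVertexSubgroup Γ (lk Γ v) ≤ raagVertexSubgroup Γ (st Γ v) :=
  vs_mono fun _ h => Or.inr h

theorem gen_mem_st (v : V) : gen Γ v ∈ raagVertexSubgroup Γ (st Γ v) := gen_mem (Or.inl rfl)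

/-! ### Cocycles -/

theorem exists_cocycle {C : Type*} [Group C] (α : RAAG Γ →* MulAut C) (d : V → C)
    (h : ∀ v w, Γ.Adj v w → d v * α (gen Γ v) (d w) = d w * α (gen Γ w) (d v)) :
    ∃ D : RAAG Γ → C, (∀ a b, D (a * b) = D a * α a (D b)) ∧ ∀ v, D (gen Γ v) = d v := by
  obtain ⟨F, hF⟩ := exists_lift (Γ := Γ) (H := C ⋊[α] RAAG Γ) (fun v => ⟨d v, gen Γ v⟩) (by
    intro v w hvw
    ext
    · simp [h v w hvw]
    · simp [gen_comm hvw])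
  have hr : ∀ g, (F g).right = g := by
    intro g
    have : (SemidirectProduct.rightHom).comp F = MonoidHom.id _ := by
      apply hom_ext
      intro v
      simp [hF]
    exact DFunLike.congr_fun this g
  refine ⟨fun g => (F g).left, ?_, ?_⟩
  · intro a b
    simp [hr]
  · intro v; simp [hF]

theorem cocycle_finiteIndex {G C : Type*} [Group G] [Group C] (α : G →* MulAut C) (D : G → C)
    (hD : ∀ a b, D (a * b) = D a * α a (D b)) (B : Subgroup C) [B.FiniteIndex]
    (hB : ∀ g, ∀ b ∈ B, α g b ∈ B) :
    ∃ H : Subgroup G, H.FiniteIndex ∧ ∀ g, g ∈ H ↔ D g ∈ B := by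
  have h1 : D 1 = 1 := by
    have := hD 1 1
    simpa using this
  have hinv : ∀ a, D a⁻¹ = α a⁻¹ (D a)⁻¹ := by
    intro a
    have := hD a⁻¹ a
    rw [inv_mul_cancel, h1] at this
    rw [map_inv (α a⁻¹)]
    exact eq_inv_of_mul_eq_one_left this.symm
  let H : Subgroup G :=
    { carrier := {g | D g ∈ B}
      one_mem' := by simp [h1]
      mul_mem' := by
        intro a b ha hb
        simp only [Set.mem_ofPred_eq] at *
        rw [hD]; exact mul_mem ha (hB _ _ hb)
      inv_mem' := by
        intro a ha
        simp only [Set.mem_ofPred_eq] at *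
        rw [hinv]; exact hB _ _ (inv_mem ha) }
  refine ⟨H, ?_, fun g => Iff.rfl⟩
  have key : ∀ a b : G, (D a)⁻¹ * D b ∈ B → a⁻¹ * b ∈ H := by
    intro a b hab
    have e : D b = D a * α a (D (a⁻¹ * b)) := by rw [← hD]; simp
    have : α a (D (a⁻¹ * b)) ∈ B := by rw [e] at hab; simpa using hab
    have := hB a⁻¹ _ this
    change D (a⁻¹ * b) ∈ B
    rw [← MulAut.mul_apply, ← map_mul, inv_mul_cancel, map_one] at this
    exact this
  have : Finite (G ⧸ H) := by
    refine Finite.of_injective (β := C ⧸ B) (fun q => (QuotientGroup.mk (D q.out) : C ⧸ B)) ?_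
    intro p q hpq
    have := QuotientGroup.eq.1 hpq
    have := key _ _ this
    have h3 := QuotientGroup.eq.2 this
    simpa using h3
  exact Subgroup.finiteIndex_of_finite_quotient

/-! ### Fox derivatives -/

/-- `D` is the Fox derivative with respect to `v` with values in `A[Y]`. -/
structure IsFox (Γ : SimpleGraph V) (v : V) {Y : Type} [MulAction (RAAG Γ) Y] (y₀ : Y)
    {A : Type} [CommRing A] (D : RAAG Γ → (Y →₀ A)) : Prop where
  fixes : ∀ l ∈ raagVertexSubgroup Γ (lk Γ v), l • y₀ = y₀
  mul : ∀ a b, D (a * b) = D a + mapDomain (fun y => a • y) (D b)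
  gen_self : D (gen Γ v) = single y₀ 1
  gen_ne : ∀ w, w ≠ v → D (gen Γ w) = 0

/-- The action on finitely supported functions as multiplicative automorphisms. -/
noncomputable def actHom (Γ : SimpleGraph V) (Y : Type) [MulAction (RAAG Γ) Y] (A : Type)
    [CommRing A] : RAAG Γ →* MulAut (Multiplicative (Y →₀ A)) where
  toFun g := AddEquiv.toMultiplicative
    { toFun := mapDomain (fun y => g • y)
      invFun := mapDomain (fun y => g⁻¹ • y)
      left_inv := by
        intro x
        rw [← mapDomain_comp]
        have : ((fun y : Y => g⁻¹ • y) ∘ fun y => g • y) = id := by funext y; simp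
        rw [this, mapDomain_id]
      right_inv := by
        intro x
        rw [← mapDomain_comp]
        have : ((fun y : Y => g • y) ∘ fun y => g⁻¹ • y) = id := by funext y; simp
        rw [this, mapDomain_id]
      map_add' := fun _ _ => mapDomain_add }
  map_one' := by
    ext x : 1
    apply Multiplicative.toAdd.injective
    change mapDomain (fun y => (1 : RAAG Γ) • y) x.toAdd = x.toAdd
    simp only [one_smul]
    exact mapDomain_id
  map_mul' a b := by
    ext x : 1
    apply Multiplicative.toAdd.injective
    change mapDomain (fun y => (a * b) • y) x.toAdd =
      mapDomain (fun y => a • y) (mapDomain (fun y => b • y) x.toAdd)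
    rw [← mapDomain_comp]
    congr 1
    funext y
    exact mul_smul a b y

theorem actHom_apply {Y : Type} [MulAction (RAAG Γ) Y] {A : Type}
    [CommRing A] (g : RAAG Γ) (x : Multiplicative (Y →₀ A)) :
    (actHom Γ Y A g x).toAdd = mapDomain (fun y => g • y) x.toAdd := rfl

open Classical in
theorem exists_fox (v : V) {Y : Type} [MulAction (RAAG Γ) Y] (y₀ : Y)
    (h₀ : ∀ l ∈ raagVertexSubgroup Γ (lk Γ v), l • y₀ = y₀) (A : Type) [CommRing A] :
    ∃ D : RAAG Γ → (Y →₀ A), IsFox Γ v y₀ D := by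
  obtain ⟨D, h1, h2⟩ := exists_cocycle (Γ := Γ) (actHom Γ Y A)
    (fun w => Multiplicative.ofAdd (if w = v then single y₀ 1 else 0)) (by
      intro w w' h
      apply Multiplicative.toAdd.injective
      simp only [toAdd_mul, actHom_apply, toAdd_ofAdd]
      by_cases hw : w = v
      · subst hw
        have : w' ≠ w := fun e => by subst e; exact h.ne rfl
        simp only [if_true, if_neg this, mapDomain_zero, add_zero, zero_add, mapDomain_single]
        rw [h₀ _ (gen_mem h)]
      · by_cases hw' : w' = v
        · subst hw'
          simp only [if_true, if_neg hw, mapDomain_zero, add_zero, zero_add, mapDomain_single]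
          rw [h₀ _ (gen_mem h.symm)]
        · simp [hw, hw'])
  refine ⟨fun g => (D g).toAdd, h₀, ?_, ?_, ?_⟩
  · intro a b
    rw [h1, toAdd_mul, actHom_apply]
  · rw [h2]; simp
  · intro w hw
    rw [h2]; simp [hw]

namespace IsFox

variable {v : V} {Y : Type} [MulAction (RAAG Γ) Y] {y₀ : Y} {A : Type} [CommRing A]
  {D : RAAG Γ → (Y →₀ A)}

theorem one (h : IsFox Γ v y₀ D) : D 1 = 0 := by
  have := h.mul 1 1
  simp only [mul_one, one_smul] at this
  rw [show (fun y : Y => y) = id from rfl, mapDomain_id] at this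
  simpa using this

theorem inv (h : IsFox Γ v y₀ D) (a : RAAG Γ) :
    D a⁻¹ = - mapDomain (fun y => a⁻¹ • y) (D a) := by
  have := h.mul a⁻¹ a
  rw [inv_mul_cancel, h.one] at this
  exact eq_neg_of_add_eq_zero_left this.symm

theorem zero_of_mem (h : IsFox Γ v y₀ D) {S : Set V} (hS : v ∉ S) {l : RAAG Γ}
    (hl : l ∈ raagVertexSubgroup Γ S) : D l = 0 := by
  refine sub_ind (p := fun l => D l = 0) h.one ?_ ?_ ?_ hl
  · intro w hw; exact h.gen_ne w (fun e => hS (e ▸ hw))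
  · intro a b ha hb; rw [h.mul, ha, hb]; simp
  · intro a ha; rw [h.inv, ha]; simp

theorem zero_of_lk (h : IsFox Γ v y₀ D) {l : RAAG Γ}
    (hl : l ∈ raagVertexSubgroup Γ (lk Γ v)) : D l = 0 :=
  h.zero_of_mem (S := lk Γ v) (fun e => (show Γ.Adj v v from e).ne rfl) hl

theorem pow (h : IsFox Γ v y₀ D) (k : ℕ) :
    D (gen Γ v ^ k) = ∑ i ∈ Finset.range k, single ((gen Γ v ^ i) • y₀) 1 := by
  induction k with
  | zero => simp [h.one]
  | succ k ih =>
    rw [pow_succ, h.mul, ih, h.gen_self, mapDomain_single, Finset.sum_range_succ]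

theorem pow_mul (h : IsFox Γ v y₀ D) (k : ℕ) {l : RAAG Γ}
    (hl : l ∈ raagVertexSubgroup Γ (lk Γ v)) :
    D (gen Γ v ^ k * l) = ∑ i ∈ Finset.range k, single ((gen Γ v ^ i) • y₀) 1 := by
  rw [h.mul, h.zero_of_lk hl, h.pow]; simp

end IsFox

theorem fox_support (v : V) (g : RAAG Γ) : ∃ J : Finset (RAAG Γ),
    ∀ (Y : Type) [MulAction (RAAG Γ) Y] (y₀ : Y) (A : Type) [CommRing A] (D : RAAG Γ → (Y →₀ A)),
      IsFox Γ v y₀ D → ∀ y ∈ (D g).support, ∃ j ∈ J, y = j • y₀ := by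
  classical
  refine gen_ind (p := fun g => ∃ J : Finset (RAAG Γ),
    ∀ (Y : Type) [MulAction (RAAG Γ) Y] (y₀ : Y) (A : Type) [CommRing A] (D : RAAG Γ → (Y →₀ A)),
      IsFox Γ v y₀ D → ∀ y ∈ (D g).support, ∃ j ∈ J, y = j • y₀) ?_ ?_ ?_ ?_ g
  · refine ⟨∅, ?_⟩
    intro Y _ y₀ A _ D h y hy
    rw [h.one] at hy; simp at hy
  · intro w
    refine ⟨{1}, ?_⟩
    intro Y _ y₀ A _ D h y hy
    by_cases e : w = v
    · subst e
      rw [h.gen_self] at hy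
      have := Finsupp.support_single_subset hy
      refine ⟨1, by simp, ?_⟩
      simpa using this
    · rw [h.gen_ne w e] at hy; simp at hy
  · rintro a b ⟨J, hJ⟩ ⟨K, hK⟩
    refine ⟨J ∪ K.image (fun j => a * j), ?_⟩
    intro Y _ y₀ A _ D h y hy
    rw [h.mul] at hy
    have := Finsupp.support_add hy
    rcases Finset.mem_union.1 this with h1 | h1
    · obtain ⟨j, hj, e⟩ := hJ Y y₀ A D h y h1
      exact ⟨j, Finset.mem_union_left _ hj, e⟩
    · have := Finsupp.mapDomain_support h1
      obtain ⟨z, hz, rfl⟩ := Finset.mem_image.1 this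
      obtain ⟨j, hj, rfl⟩ := hK Y y₀ A D h z hz
      exact ⟨a * j, Finset.mem_union_right _ (Finset.mem_image_of_mem _ hj), by rw [mul_smul]⟩
  · rintro a ⟨J, hJ⟩
    refine ⟨J.image (fun j => a⁻¹ * j), ?_⟩
    intro Y _ y₀ A _ D h y hy
    rw [h.inv, Finsupp.support_neg] at hy
    have := Finsupp.mapDomain_support hy
    obtain ⟨z, hz, rfl⟩ := Finset.mem_image.1 this
    obtain ⟨j, hj, rfl⟩ := hJ Y y₀ A D h z hz
    exact ⟨a⁻¹ * j, Finset.mem_image_of_mem _ hj, by rw [mul_smul]⟩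

/-- The key lemma. -/
theorem fox_key {v : V} {Y : Type} [MulAction (RAAG Γ) Y] {y₀ : Y} {k : ℕ} (hk : 1 ≤ k)
    {D : RAAG Γ → (Y →₀ ZMod (k + 1))} (h : IsFox Γ v y₀ D) {u l y : RAAG Γ}
    (hl : l ∈ raagVertexSubgroup Γ (lk Γ v))
    (huy : D (u * (gen Γ v ^ k * l)) = D (y * u)) :
    ∃ z ∈ (D y).support, ∃ t : ℤ, (y ^ t * u) • y₀ = z := by
  classical
  let π : Y → MulAction.orbitRel.Quotient (Subgroup.zpowers y) Y := Quotient.mk _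
  have hπ : ∀ z, π (y • z) = π z := by
    intro z
    apply Quotient.sound
    exact ⟨⟨y, Subgroup.mem_zpowers y⟩, rfl⟩
  rw [h.mul u, h.pow_mul k hl, h.mul y] at huy
  have e1 := congrArg (mapDomain π) huy
  rw [mapDomain_add, mapDomain_add, ← mapDomain_comp (g := π) (f := fun z => y • z),
    show π ∘ (fun z => y • z) = π from funext hπ, add_comm (mapDomain π (D u)), add_right_cancel_iff] at e1
  have e2 := DFunLike.congr_fun e1 (π (u • y₀))
  have hne : (mapDomain π (mapDomain (fun y => u • y)
      (∑ i ∈ Finset.range k, single ((gen Γ v ^ i) • y₀) (1 : ZMod (k + 1))))) (π (u • y₀)) ≠ 0 := by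
    rw [mapDomain_finset_sum, mapDomain_finset_sum]
    simp only [mapDomain_single]
    rw [Finsupp.finset_sum_apply]
    simp only [single_apply]
    rw [Finset.sum_boole]
    intro h0
    rw [ZMod.natCast_eq_zero_iff] at h0
    have hle : (Finset.filter (fun i => π (u • gen Γ v ^ i • y₀) = π (u • y₀))
      (Finset.range k)).card ≤ k := by
      simpa using Finset.card_filter_le (Finset.range k)
        (fun i => π (u • gen Γ v ^ i • y₀) = π (u • y₀))
    have hpos : 0 < (Finset.filter (fun i => π (u • gen Γ v ^ i • y₀) = π (u • y₀))
      (Finset.range k)).card := by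
      apply Finset.card_pos.2
      exact ⟨0, by simp; omega⟩
    have := Nat.le_of_dvd hpos h0
    omega
  rw [e2] at hne
  have := Finsupp.mapDomain_support (Finsupp.mem_support_iff.2 hne)
  obtain ⟨z, hz, e⟩ := Finset.mem_image.1 this
  obtain ⟨⟨s, hs⟩, hs2⟩ := Quotient.exact e
  obtain ⟨t, rfl⟩ := Subgroup.mem_zpowers_iff.1 hs
  refine ⟨z, hz, t, ?_⟩
  rw [mul_smul]
  exact hs2

/-- Elements of `G ⧸ H` are equal. -/
theorem quot_smul_eq {G : Type*} [Group G] {H : Subgroup G} {a b : G}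
    (h : a • (QuotientGroup.mk (1 : G) : G ⧸ H) = b • (QuotientGroup.mk (1 : G) : G ⧸ H)) :
    a⁻¹ * b ∈ H := by
  have : (QuotientGroup.mk (a * 1) : G ⧸ H) = QuotientGroup.mk (b * 1) := h
  rw [mul_one, mul_one] at this
  exact QuotientGroup.eq.1 this

theorem quot_smul_eq' {G : Type*} [Group G] {H : Subgroup G} {a b : G}
    (h : a⁻¹ * b ∈ H) :
    a • (QuotientGroup.mk (1 : G) : G ⧸ H) = b • (QuotientGroup.mk (1 : G) : G ⧸ H) := by
  change (QuotientGroup.mk (a * 1) : G ⧸ H) = QuotientGroup.mk (b * 1)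
  rw [mul_one, mul_one]
  exact QuotientGroup.eq.2 h

theorem quot_fixes {G : Type*} [Group G] {H : Subgroup G} {a : G} (h : a ∈ H) :
    a • (QuotientGroup.mk (1 : G) : G ⧸ H) = QuotientGroup.mk (1 : G) := by
  have := quot_smul_eq' (H := H) (a := a) (b := 1) (by simpa using h)
  rwa [one_smul] at this

theorem exists_fox_quot (v : V) (H : Subgroup (RAAG Γ))
    (h : raagVertexSubgroup Γ (lk Γ v) ≤ H) (A : Type) [CommRing A] :
    ∃ D : RAAG Γ → ((RAAG Γ ⧸ H) →₀ A), IsFox Γ v (QuotientGroup.mk (1 : RAAG Γ)) D :=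
  exists_fox v _ (fun _ hl => quot_fixes (h hl)) A

/-- Centralizer-type lemma. -/
theorem mem_st_of_conj {v : V} {d : ℕ} (hd : 1 ≤ d) {n l : RAAG Γ}
    (hl : l ∈ raagVertexSubgroup Γ (lk Γ v))
    (h : n * gen Γ v ^ d = gen Γ v ^ d * l * n) : n ∈ raagVertexSubgroup Γ (st Γ v) := by
  classical
  obtain ⟨D, hD⟩ := exists_fox_quot (Γ := Γ) v _ le_rfl (ZMod (d + 1))
  obtain ⟨z, hz, t, ht⟩ := fox_key hd hD (u := n) (l := 1) (y := gen Γ v ^ d * l) (one_mem _)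
    (by rw [mul_one, h])
  rw [hD.pow_mul d hl] at hz
  have := Finsupp.support_finsetSum hz
  obtain ⟨i, -, hi⟩ := Finset.mem_biUnion.1 this
  have := Finsupp.support_single_subset hi
  rw [Finset.mem_singleton] at this
  rw [this] at ht
  have h3 := quot_smul_eq ht
  have h4 := lk_le_st v h3
  have hy : gen Γ v ^ d * l ∈ raagVertexSubgroup Γ (st Γ v) :=
    mul_mem (pow_mem (gen_mem_st v) d) (lk_le_st v hl)
  have h5 : n = (gen Γ v ^ d * l) ^ (-t) * (gen Γ v ^ i *
      (((gen Γ v ^ d * l) ^ t * n)⁻¹ * gen Γ v ^ i)⁻¹) := by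
    rw [zpow_neg]; group
  rw [h5]
  exact mul_mem (zpow_mem hy _) (mul_mem (pow_mem (gen_mem_st v) i) (inv_mem h4))

/-! ### Finite index of `N * G(lk v)` -/

theorem gen_zpow_eq_one {v : V} {d : ℤ} (h : gen Γ v ^ d = 1) : d = 0 := by
  obtain ⟨F, hF⟩ := exists_lift (Γ := Γ) (H := Multiplicative ℤ) (fun _ => Multiplicative.ofAdd 1)
    (fun _ _ _ => rfl)
  have := congrArg F h
  rw [map_zpow, hF, map_one F, ← ofAdd_zsmul, ofAdd_eq_one] at this
  simpa using this

theorem gen_zpow_mem_lk {v : V} {d : ℤ} (h : gen Γ v ^ d ∈ raagVertexSubgroup Γ (lk Γ v)) :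
    d = 0 := by
  apply gen_zpow_eq_one (Γ := Γ) (v := v)
  rw [← ret_of_mem h, map_zpow, ret_gen_not (S := lk Γ v) (fun e => (show Γ.Adj v v from e).ne rfl), one_zpow]

theorem md_apply {G Y A : Type*} [Group G] [MulAction G Y] [AddCommMonoid A] (a : G) (F : Y →₀ A)
    (z : Y) : mapDomain (fun y => a • y) F z = F (a⁻¹ • z) := by
  have := mapDomain_apply (f := fun y : Y => a • y) (MulAction.injective a) F (a⁻¹ • z)
  simpa using this

theorem fox_zpow_support {v : V} {Y : Type} [MulAction (RAAG Γ) Y] {y₀ : Y} {A : Type} [CommRing A]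
    {D : RAAG Γ → (Y →₀ A)} (h : IsFox Γ v y₀ D) (s : ℤ) (z : Y) (hz : D (gen Γ v ^ s) z ≠ 0) :
    ∃ i : ℤ, z = gen Γ v ^ i • y₀ := by
  classical
  have nat : ∀ (k : ℕ) (z : Y), D (gen Γ v ^ k) z ≠ 0 → ∃ i : ℤ, z = gen Γ v ^ i • y₀ := by
    intro k z hz
    rw [h.pow] at hz
    have := Finsupp.support_finsetSum (Finsupp.mem_support_iff.2 hz)
    obtain ⟨i, -, hi⟩ := Finset.mem_biUnion.1 this
    have := Finsupp.support_single_subset hi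
    rw [Finset.mem_singleton] at this
    exact ⟨i, by rw [this, zpow_natCast]⟩
  obtain ⟨k, rfl | rfl⟩ := s.eq_nat_or_neg
  · rw [zpow_natCast] at hz
    exact nat k z hz
  · rw [zpow_neg, zpow_natCast, h.inv, Finsupp.neg_apply, md_apply, inv_inv] at hz
    obtain ⟨i, hi⟩ := nat k _ (fun e => hz (by rw [e, neg_zero]))
    refine ⟨-k + i, ?_⟩
    rw [zpow_add, mul_smul, ← hi, zpow_neg, zpow_natCast, inv_smul_smul]

theorem fox_orbit {v : V} (N : Subgroup (RAAG Γ)) [hN : N.Normal] {n : RAAG Γ} (hn : n ∈ N)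
    (hnS : n ∉ raagVertexSubgroup Γ (st Γ v))
    {D : RAAG Γ → ((RAAG Γ ⧸ raagVertexSubgroup Γ (lk Γ v)) →₀ ℤ)}
    (hD : IsFox Γ v (QuotientGroup.mk (1 : RAAG Γ)) D) (g : RAAG Γ) :
    ∃ m ∈ N, D m (g • (QuotientGroup.mk (1 : RAAG Γ))) ≠ 0 := by
  classical
  by_contra hcon
  push Not at hcon
  set y₀ : RAAG Γ ⧸ raagVertexSubgroup Γ (lk Γ v) := QuotientGroup.mk (1 : RAAG Γ) with hy₀
  set x := gen Γ v with hx
  let h : (RAAG Γ ⧸ raagVertexSubgroup Γ (lk Γ v)) → ℤ := fun z => D g (g • z)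
  let E : RAAG Γ → (RAAG Γ ⧸ raagVertexSubgroup Γ (lk Γ v)) → ℤ :=
    fun a z => D a z - (h (a⁻¹ • z) - h z)
  have Emul : ∀ a b z, E (a * b) z = E a z + E b (a⁻¹ • z) := by
    intro a b z
    simp only [E]
    rw [hD.mul, Finsupp.add_apply, md_apply, mul_inv_rev, mul_smul]
    ring
  have E1 : ∀ z, E 1 z = 0 := by
    intro z; simp [E, hD.one]
  have Einv : ∀ a z, E a⁻¹ z = - E a (a • z) := by
    intro a z
    have := Emul a a⁻¹ (a • z)
    rw [mul_inv_cancel, E1, inv_smul_smul] at this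
    linarith
  have EN : ∀ m ∈ N, E m y₀ = 0 := by
    intro m hm
    have := hcon (g * m * g⁻¹) (hN.conj_mem m hm g)
    rw [hD.mul, hD.mul, hD.inv, Finsupp.add_apply, Finsupp.add_apply, md_apply, md_apply,
      Finsupp.neg_apply, md_apply, inv_smul_smul, inv_inv, mul_inv_rev, mul_smul,
      inv_smul_smul] at this
    simp only [E, h]
    linarith
  -- finiteness
  have hfin : ∀ᶠ z in Filter.cofinite, h z = 0 := by
    have h1 : ∀ᶠ z in Filter.cofinite, D g z = 0 := by
      rw [Filter.eventually_cofinite]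
      exact (D g).finite_support
    exact (MulAction.injective g).tendsto_cofinite.eventually h1
  have Enfin : ∀ᶠ z in Filter.cofinite, E n z = 0 := by
    have h1 : ∀ᶠ z in Filter.cofinite, D n z = 0 := by
      rw [Filter.eventually_cofinite]
      exact (D n).finite_support
    filter_upwards [h1, hfin, (MulAction.injective n⁻¹).tendsto_cofinite.eventually hfin]
      with z a b c
    simp only [E, a, b, c]; simp
  have hp : Function.Injective (fun s : ℤ => x ^ (-s) • y₀) := by
    intro s s' e
    have := quot_smul_eq e
    rw [← zpow_neg, ← zpow_add] at this
    have := gen_zpow_mem_lk this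
    omega
  have hqlt : ∀ s s' : ℤ, s' < s →
      (x ^ s' * n⁻¹ * x ^ (-s')) • y₀ ≠ (x ^ s * n⁻¹ * x ^ (-s)) • y₀ := by
    intro s s' hlt e
    have hl := quot_smul_eq e
    set l := (x ^ s' * n⁻¹ * x ^ (-s'))⁻¹ * (x ^ s * n⁻¹ * x ^ (-s)) with hldef
    have hc := lk_comm hl
    apply hnS
    obtain ⟨d, hd⟩ : ∃ d : ℕ, s - s' = d := ⟨(s - s').toNat, by omega⟩
    apply mem_st_of_conj (d := d) (l := l) (by omega) hl
    have h1 : n * x ^ (s - s') * n⁻¹ = x ^ (-s') * l * x ^ s := by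
      rw [hldef]; group
    have h2 : x ^ (-s') * l * x ^ s = x ^ (s - s') * l := by
      rw [mul_assoc, ← (hc.zpow_left s).eq, ← mul_assoc, ← zpow_add]
      congr 2; ring
    rw [h2, hd, zpow_natCast, mul_inv_eq_iff_eq_mul] at h1
    exact h1
  have hq : Function.Injective (fun s : ℤ => (x ^ s * n⁻¹ * x ^ (-s)) • y₀) := by
    intro s s' e
    rcases lt_trichotomy s s' with hlt | heq | hlt
    · exact absurd e (hqlt s' s hlt)
    · exact heq
    · exact absurd e.symm (hqlt s s' hlt)
  have main : ∀ᶠ s : ℤ in Filter.cofinite, D (x ^ s) y₀ = - h y₀ := by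
    have a1 := hp.tendsto_cofinite.eventually Enfin
    have a2 := ((MulAction.injective n).comp hq).tendsto_cofinite.eventually Enfin
    have a3 := hp.tendsto_cofinite.eventually hfin
    have a4 := hq.tendsto_cofinite.eventually hfin
    have a5 := ((MulAction.injective n⁻¹).comp hp).tendsto_cofinite.eventually hfin
    filter_upwards [a1, a2, a3, a4, a5] with s b1 b2 b3 b4 b5
    simp only [Function.comp_apply] at b2 b5
    have hm : x ^ s * n * x ^ (-s) * n⁻¹ ∈ N := by
      apply mul_mem _ (inv_mem hn)
      rw [zpow_neg]
      exact hN.conj_mem n hn _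
    have e0 := EN _ hm
    rw [Emul, Emul, Emul, zpow_neg, Einv, Einv] at e0
    have r1 : (x ^ s)⁻¹ • y₀ = x ^ (-s) • y₀ := by rw [zpow_neg]
    have r2 : x ^ s • (x ^ s * n)⁻¹ • y₀ = (x ^ s * n⁻¹ * x ^ (-s)) • y₀ := by
      rw [← mul_smul]; congr 1; group
    have r3 : n • (x ^ s * n * (x ^ s)⁻¹)⁻¹ • y₀ = n • (x ^ s * n⁻¹ * x ^ (-s)) • y₀ := by
      congr 2; group
    rw [r1, r2, r3, b1, b2] at e0
    have hDq : D (x ^ s) ((x ^ s * n⁻¹ * x ^ (-s)) • y₀) = 0 := by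
      by_contra hne
      obtain ⟨i, hi⟩ := fox_zpow_support hD s _ hne
      have h1 := lk_le_st v (quot_smul_eq hi)
      apply hnS
      have hxs : ∀ j : ℤ, x ^ j ∈ raagVertexSubgroup Γ (st Γ v) := fun j =>
        zpow_mem (gen_mem_st v) j
      have : n = x ^ (-s) * ((x ^ s * n⁻¹ * x ^ (-s))⁻¹ * x ^ i) * (x ^ (-i) * x ^ s) := by group
      rw [this]
      exact mul_mem (mul_mem (hxs _) h1) (mul_mem (hxs _) (hxs _))
    have hEq : E (x ^ s) ((x ^ s * n⁻¹ * x ^ (-s)) • y₀) = 0 := by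
      simp only [E]
      have r4 : (x ^ s)⁻¹ • (x ^ s * n⁻¹ * x ^ (-s)) • y₀ = n⁻¹ • x ^ (-s) • y₀ := by
        rw [← mul_smul, ← mul_smul]; congr 1; group
      rw [r4, hDq, b4, b5]; ring
    rw [hEq] at e0
    simp only [E] at e0
    rw [r1, b3] at e0
    linarith
  rw [Int.cofinite_eq, Filter.eventually_sup] at main
  obtain ⟨s, hs1, hs2⟩ := (main.1.and (Filter.eventually_le_atBot 0)).exists
  obtain ⟨s', hs1', hs2'⟩ := (main.2.and (Filter.eventually_ge_atTop 1)).exists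
  have inj : ∀ i : ℤ, x ^ i • y₀ = y₀ → i = 0 := by
    intro i hi
    have := @hp (-i) 0 (by simpa using hi)
    omega
  have v1 : D (x ^ s') y₀ = 1 := by
    obtain ⟨k, rfl⟩ : ∃ k : ℕ, s' = k := ⟨s'.toNat, by omega⟩
    rw [zpow_natCast, hD.pow, Finsupp.finsetSum_apply]
    rw [Finset.sum_eq_single 0]
    · simp
    · intro i _ hi
      rw [Finsupp.single_apply, if_neg]
      intro e
      have := inj i (by rw [zpow_natCast]; exact e)
      omega
    · intro hh; exfalso; apply hh; simp; omega
  have v2 : D (x ^ s) y₀ = 0 := by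
    obtain ⟨k, rfl⟩ : ∃ k : ℕ, s = -k := ⟨(-s).toNat, by omega⟩
    rw [zpow_neg, zpow_natCast, hD.inv, Finsupp.neg_apply, md_apply, inv_inv, hD.pow,
      Finsupp.finsetSum_apply, Finset.sum_eq_zero, neg_zero]
    intro i hi
    rw [Finsupp.single_apply, if_neg]
    intro e
    have h3 := inj (-k + i) (by
      rw [zpow_add, mul_smul, zpow_natCast, e, ← mul_smul, zpow_neg, zpow_natCast,
        inv_mul_cancel, one_smul])
    have := Finset.mem_range.1 hi
    omega
  rw [v1] at hs1'
  rw [v2] at hs1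
  omega

theorem finiteIndex_sup_lk {v : V} (N : Subgroup (RAAG Γ)) [hN : N.Normal] (hfg : N.FG)
    (hnS : ¬ N ≤ raagVertexSubgroup Γ (st Γ v)) :
    (N ⊔ raagVertexSubgroup Γ (lk Γ v)).FiniteIndex := by
  classical
  obtain ⟨n, hn, hn'⟩ := SetLike.not_le_iff_exists.1 hnS
  obtain ⟨D, hD⟩ := exists_fox_quot (Γ := Γ) v _ le_rfl ℤ
  obtain ⟨T, hT⟩ := hfg
  let T' := T.biUnion (fun x => (D x).support)
  have hsupp : ∀ m ∈ N, ∀ z ∈ (D m).support, ∃ a ∈ N, ∃ t ∈ T', z = a • t := by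
    intro m hm
    rw [← hT] at hm
    induction hm using Subgroup.closure_induction with
    | mem x hx =>
      intro z hz
      exact ⟨1, one_mem _, z, Finset.mem_biUnion.2 ⟨x, hx, hz⟩, by simp⟩
    | one => intro z hz; rw [hD.one] at hz; simp at hz
    | mul a b ha hb iha ihb =>
      intro z hz
      rw [hT] at ha
      rw [hD.mul] at hz
      rcases Finset.mem_union.1 (Finsupp.support_add hz) with h1 | h1
      · exact iha z h1
      · obtain ⟨z', hz', rfl⟩ := Finset.mem_image.1 (Finsupp.mapDomain_support h1)
        obtain ⟨c, hc, t, ht, rfl⟩ := ihb z' hz'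
        exact ⟨a * c, mul_mem ha hc, t, ht, by rw [mul_smul]⟩
    | inv a ha iha =>
      intro z hz
      rw [hT] at ha
      rw [hD.inv, Finsupp.support_neg] at hz
      obtain ⟨z', hz', rfl⟩ := Finset.mem_image.1 (Finsupp.mapDomain_support hz)
      obtain ⟨c, hc, t, ht, rfl⟩ := iha z' hz'
      exact ⟨a⁻¹ * c, mul_mem (inv_mem ha) hc, t, ht, by rw [mul_smul]⟩
  have : Finite (RAAG Γ ⧸ (N ⊔ raagVertexSubgroup Γ (lk Γ v))) := by
    refine Finite.of_surjective (α := T') (fun t => QuotientGroup.mk (t.1.out)) ?_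
    intro q
    obtain ⟨g, rfl⟩ := QuotientGroup.mk_surjective q
    obtain ⟨m, hm, hne⟩ := fox_orbit N hn hn' hD g
    obtain ⟨a, ha, t, ht, e⟩ := hsupp m hm _ (Finsupp.mem_support_iff.2 hne)
    refine ⟨⟨t, ht⟩, ?_⟩
    apply QuotientGroup.eq.2
    change t.out⁻¹ * g ∈ _
    have e2 : g • (QuotientGroup.mk (1 : RAAG Γ) : RAAG Γ ⧸ raagVertexSubgroup Γ (lk Γ v))
        = (a * t.out) • QuotientGroup.mk (1 : RAAG Γ) := by
      rw [e, mul_smul]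
      congr 1
      have : t.out • (QuotientGroup.mk (1 : RAAG Γ) : RAAG Γ ⧸ raagVertexSubgroup Γ (lk Γ v))
        = QuotientGroup.mk (t.out * 1) := rfl
      rw [this, mul_one, QuotientGroup.out_eq']
    have h3 := quot_smul_eq e2.symm
    have h4 : t.out⁻¹ * g = (t.out⁻¹ * a * t.out⁻¹⁻¹) * ((a * t.out)⁻¹ * g) := by group
    rw [h4]
    exact mul_mem (Subgroup.mem_sup_left (hN.conj_mem a ha _)) (Subgroup.mem_sup_right h3)
  exact Subgroup.finiteIndex_of_finite_quotient

/-! ### Fullness -/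

theorem exists_decomp [Finite V] (Γ : SimpleGraph V) : ∃ (k : ℕ) (P : Fin k → Set V),
    IsJoinDecomposition Γ P ∧ ∀ v, ∃ i, P i = {w | Γᶜ.Reachable v w} := by
  classical
  have : Finite Γᶜ.ConnectedComponent := inferInstance
  obtain ⟨k, ⟨e⟩⟩ := Finite.exists_equiv_fin Γᶜ.ConnectedComponent
  have hmem : ∀ i v, v ∈ (e.symm i).supp ↔ e (Γᶜ.connectedComponentMk v) = i := by
    intro i v
    rw [SimpleGraph.ConnectedComponent.mem_supp_iff, ← e.apply_eq_iff_eq_symm_apply]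
  refine ⟨k, fun i => (e.symm i).supp, ⟨?_, ?_, ?_, ?_⟩, ?_⟩
  · intro i; exact (e.symm i).nonempty_supp
  · intro v
    refine ⟨e (Γᶜ.connectedComponentMk v), (hmem _ _).2 rfl, ?_⟩
    intro j hj; exact ((hmem _ _).1 hj).symm
  · intro i j hij a ha b hb
    rw [hmem] at ha hb
    by_contra hadj
    apply hij
    rw [← ha, ← hb]
    congr 1
    by_cases hab : a = b
    · rw [hab]
    · apply SimpleGraph.ConnectedComponent.sound
      apply SimpleGraph.Adj.reachable
      rw [SimpleGraph.compl_adj]; exact ⟨hab, hadj⟩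
  · rintro i ⟨A, B, ⟨a, ha⟩, ⟨b, hb⟩, hdis, hU, hAB⟩
    have hU' : A ∪ B = (e.symm i).supp := hU
    have hAs : ∀ x, x ∈ A → e (Γᶜ.connectedComponentMk x) = i := by
      intro x hx
      rw [← hmem]; rw [← hU']; exact Or.inl hx
    have hclosed : ∀ x y, x ∈ A → Γᶜ.Adj x y → y ∈ A := by
      intro x y hx hxy
      have hy : y ∈ A ∪ B := by
        rw [hU', hmem, ← hAs x hx]
        congr 1
        exact SimpleGraph.ConnectedComponent.sound hxy.symm.reachable
      rcases hy with hy | hy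
      · exact hy
      · exact absurd (hAB x hx y hy) ((SimpleGraph.compl_adj _ _ _).1 hxy).2
    have hreach : ∀ x y, Γᶜ.Reachable x y → x ∈ A → y ∈ A := by
      rintro x y ⟨p⟩
      induction p with
      | nil => exact id
      | cons hadj _ ih => intro hx; exact ih (hclosed _ _ hx hadj)
    have hbi : e (Γᶜ.connectedComponentMk b) = i := by
      rw [← hmem]; rw [← hU']; exact Or.inr hb
    have : Γᶜ.Reachable a b := by
      apply SimpleGraph.ConnectedComponent.exact
      apply e.injective
      rw [hbi, hAs a ha]
    exact Set.disjoint_left.1 hdis (hreach a b this ha) hb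
  · intro v
    refine ⟨e (Γᶜ.connectedComponentMk v), ?_⟩
    ext w
    rw [hmem, e.apply_eq_iff_eq, SimpleGraph.ConnectedComponent.eq]
    exact ⟨fun h => h.symm, fun h => SimpleGraph.Reachable.symm h⟩

theorem le_lk_of_le_st (N : Subgroup (RAAG Γ)) [hN : N.Normal] {v w : V}
    (h : N ≤ raagVertexSubgroup Γ (st Γ v)) (hw : Γᶜ.Adj v w) :
    N ≤ raagVertexSubgroup Γ (lk Γ w) := by
  intro n hn
  rw [SimpleGraph.compl_adj] at hw
  have hwS : w ∉ st Γ v := by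
    rintro (e | e)
    · exact hw.1 e.symm
    · exact hw.2 e
  have h1 := ret_of_mem (h (hN.conj_mem n hn (gen Γ w)))
  have h2 := ret_of_mem (h hn)
  rw [map_mul, map_mul, map_inv, ret_gen_not hwS, h2] at h1
  have h3 : n ∈ raagVertexSubgroup Γ (st Γ w) := by
    apply mem_st_of_conj (d := 1) (l := 1) le_rfl (one_mem _)
    rw [one_mul, inv_one, mul_one] at h1
    rw [pow_one, mul_one]
    nth_rw 1 [h1]; group
  have h4 := ret_of_mem h3
  have h5 := ret_mem (st Γ v ∩ st Γ w) n
  rw [← ret_ret, h4, h2] at h5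
  refine vs_mono ?_ h5
  rintro x ⟨hx1, hx2 | hx2⟩
  · exact absurd (hx2 ▸ hx1) hwS
  · exact hx2

theorem not_le_st [Finite V] (N : Subgroup (RAAG Γ)) [hN : N.Normal] (hfull : IsFullSubgroup Γ N)
    {v w : V} (hvw : Γᶜ.Adj v w) : ¬ N ≤ raagVertexSubgroup Γ (st Γ v) := by
  classical
  intro hle
  obtain ⟨k, P, hP, hP2⟩ := exists_decomp Γ
  obtain ⟨i, hi⟩ := hP2 v
  have hne := hfull k P hP i
  apply hne
  have h0 : N ≤ raagVertexSubgroup Γ (lk Γ v) :=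
    le_lk_of_le_st N ((le_lk_of_le_st N hle hvw).trans (lk_le_st w)) hvw.symm
  have hall : ∀ x y, Γᶜ.Reachable x y → N ≤ raagVertexSubgroup Γ (lk Γ x) →
      N ≤ raagVertexSubgroup Γ (lk Γ y) := by
    rintro x y ⟨p⟩
    induction p with
    | nil => exact id
    | cons hadj _ ih =>
      intro hx
      exact ih (le_lk_of_le_st N (hx.trans (lk_le_st _)) hadj)
  rw [eq_bot_iff]
  rintro n ⟨hn, hn2⟩
  have key : ∀ F : Finset V, (∀ x ∈ F, x ∈ P i) → ret Γ {x | x ∈ P i ∧ ∀ y ∈ F, Γ.Adj y x} n = n := by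
    intro F
    induction F using Finset.induction_on with
    | empty =>
      intro _
      apply ret_of_mem
      refine vs_mono ?_ hn2
      intro x hx
      exact ⟨hx, by simp⟩
    | insert a F ha ih =>
      intro hF
      have h1 := ih (fun x hx => hF x (Finset.mem_insert_of_mem hx))
      have haP : a ∈ P i := hF a (Finset.mem_insert_self _ _)
      rw [hi] at haP
      have h2 := ret_of_mem (hall v a haP h0 hn)
      have h3 := ret_ret (Γ := Γ) (lk Γ a) {x | x ∈ P i ∧ ∀ y ∈ F, Γ.Adj y x} n
      rw [h1, h2] at h3
      apply ret_of_mem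
      have h6 := ret_mem (lk Γ a ∩ {x | x ∈ P i ∧ ∀ y ∈ F, Γ.Adj y x}) n
      rw [← h3] at h6
      refine vs_mono ?_ h6
      rintro x ⟨hx1, hx2, hx3⟩
      refine ⟨hx2, ?_⟩
      intro y hy
      rcases Finset.mem_insert.1 hy with rfl | hy
      · exact hx1
      · exact hx3 y hy
  have := Fintype.ofFinite V
  have h1 := key (Finset.univ.filter (fun x => x ∈ P i)) (by simp)
  have h2 : {x | x ∈ P i ∧ ∀ y ∈ Finset.univ.filter (fun x => x ∈ P i), Γ.Adj y x} = (∅ : Set V) := by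
    ext x
    constructor
    · rintro ⟨hx, hx2⟩
      exact absurd rfl (hx2 x (by simpa using hx)).ne
    · intro h; exact h.elim
  rw [h2, ret_empty] at h1
  exact Subgroup.mem_bot.2 h1.symm

/-! ### Residual finiteness -/

instance fi_comap {G H : Type*} [Group G] [Group H] (f : G →* H) (K : Subgroup H)
    [hK : K.FiniteIndex] : (K.comap f).FiniteIndex := by
  constructor
  rw [Subgroup.index_comap]
  exact fun h => hK.index_ne_zero (Subgroup.index_eq_zero_of_relIndex_eq_zero h)

theorem free_rf {X : Type} (w : FreeGroup X) (hw : w ≠ 1) :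
    ∃ H : Subgroup (FreeGroup X), H.FiniteIndex ∧ w ∉ H := by
  classical
  let L := w.toWord
  let B : Finset (FreeGroup X) := (L.tails.map FreeGroup.mk).toFinset
  have hB : ∀ L', L' <:+ L → FreeGroup.mk L' ∈ B := by
    intro L' h
    simp only [B, List.mem_toFinset, List.mem_map, List.mem_tails]
    exact ⟨L', h, rfl⟩
  have hσ : ∀ x : X, ∃ σ : Equiv.Perm B, ∀ a b : B, b.1 = FreeGroup.of x * a.1 → σ a = b := by
    intro x
    obtain ⟨σ, h⟩ := Equiv.Perm.exists_extending_pair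
      (α := {r : B // FreeGroup.of x * r.1 ∈ B}) (β := B) (fun r => r.1)
      (fun r => ⟨FreeGroup.of x * r.1.1, r.2⟩) Subtype.val_injective
      (by
        intro a b e
        have := congrArg Subtype.val e
        exact Subtype.ext (Subtype.ext (mul_left_cancel this)))
    refine ⟨σ, ?_⟩
    rintro a ⟨b, hb⟩ e
    change b = _ at e
    subst e
    exact h ⟨a, hb⟩
  choose σ hσ using hσ
  let F : FreeGroup X →* Equiv.Perm B := FreeGroup.lift σ
  have h1B : (1 : FreeGroup X) ∈ B := hB [] (List.nil_suffix)
  have key : ∀ (L' : List (X × Bool)) (h : L' <:+ L),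
      F (FreeGroup.mk L') ⟨1, h1B⟩ = ⟨FreeGroup.mk L', hB L' h⟩ := by
    intro L'
    induction L' with
    | nil => intro h; change F 1 _ = _; rw [map_one]; rfl
    | cons p L'' ih =>
      intro h
      have h2 : L'' <:+ L := (List.suffix_cons p L'').trans h
      obtain ⟨x, b⟩ := p
      cases b with
      | true =>
        have e : FreeGroup.mk ((x, true) :: L'') = FreeGroup.of x * FreeGroup.mk L'' := by
          rw [FreeGroup.of, FreeGroup.mul_mk]; rfl
        have e2 : F (FreeGroup.mk ((x, true) :: L'')) = σ x * F (FreeGroup.mk L'') := by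
          rw [e, map_mul, FreeGroup.lift_apply_of]
        rw [e2, Equiv.Perm.mul_apply, ih h2]
        exact hσ x _ _ e
      | false =>
        have e : FreeGroup.mk ((x, false) :: L'') = (FreeGroup.of x)⁻¹ * FreeGroup.mk L'' := by
          rw [FreeGroup.of, FreeGroup.inv_mk, FreeGroup.mul_mk]; rfl
        have e2 : F (FreeGroup.mk ((x, false) :: L'')) = (σ x)⁻¹ * F (FreeGroup.mk L'') := by
          rw [e, map_mul, map_inv, FreeGroup.lift_apply_of]
        rw [e2, Equiv.Perm.mul_apply, ih h2, Equiv.Perm.inv_eq_iff_eq]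
        symm
        apply hσ x
        change FreeGroup.mk L'' = FreeGroup.of x * FreeGroup.mk ((x, false) :: L'')
        rw [e, mul_inv_cancel_left]
  refine ⟨F.ker, inferInstance, ?_⟩
  intro hk
  have h3 := key L List.suffix_rfl
  have h4 : FreeGroup.mk L = w := FreeGroup.mk_toWord
  rw [MonoidHom.mem_ker] at hk
  have h5 : F (FreeGroup.mk L) = 1 := by rw [h4, hk]
  rw [h5] at h3
  have h6 := congrArg Subtype.val h3
  change 1 = FreeGroup.mk L at h6
  exact hw (h6.trans h4).symm

theorem finite_hom {C P : Type*} [Group C] [Group.FG C] [Group P] [Finite P] : Finite (C →* P) := by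
  obtain ⟨S, hS⟩ := Group.FG.out (G := C)
  refine Finite.of_injective (β := S → P) (fun φ s => φ s.1) ?_
  intro φ ψ h
  apply MonoidHom.eq_of_eqOn_dense hS
  intro x hx
  exact congrFun h ⟨x, hx⟩

theorem exists_char {C : Type*} [Group C] [Group.FG C] (H : Subgroup C) [H.FiniteIndex] :
    ∃ K : Subgroup C, K.Characteristic ∧ K.FiniteIndex ∧ K ≤ H := by
  have : Finite (C ⧸ H) := inferInstance
  have : Finite (C →* Equiv.Perm (C ⧸ H)) := finite_hom
  refine ⟨⨅ φ : C →* Equiv.Perm (C ⧸ H), φ.ker, ?_, ?_, ?_⟩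
  · rw [Subgroup.characteristic_iff_le_comap]
    intro e x hx
    rw [Subgroup.mem_comap, Subgroup.mem_iInf]
    intro φ
    rw [Subgroup.mem_iInf] at hx
    exact hx (φ.comp e.toMonoidHom)
  · exact Subgroup.finiteIndex_iInf fun φ => inferInstance
  · intro x hx
    rw [Subgroup.mem_iInf] at hx
    have h1 := hx (MulAction.toPermHom C (C ⧸ H))
    rw [MonoidHom.mem_ker] at h1
    have h2 := DFunLike.congr_fun h1 (QuotientGroup.mk 1)
    change x • (QuotientGroup.mk (1 : C) : C ⧸ H) = QuotientGroup.mk 1 at h2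
    have h3 : (QuotientGroup.mk (x * 1) : C ⧸ H) = QuotientGroup.mk 1 := h2
    have := QuotientGroup.eq.1 h3.symm
    simpa using this

theorem free_letters {X : Type} (c : FreeGroup X) : ∃ J : Finset X, ∀ e : X → X,
    (∀ x ∈ J, e x = x) → FreeGroup.map e c = c := by
  classical
  induction c using FreeGroup.induction_on with
  | C1 => exact ⟨∅, fun e _ => map_one _⟩
  | of x => exact ⟨{x}, fun e h => by rw [FreeGroup.map.of, h x (by simp)]⟩
  | inv_of x ih =>
    obtain ⟨J, hJ⟩ := ih
    exact ⟨J, fun e h => by rw [map_inv, hJ e h]⟩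
  | mul a b iha ihb =>
    obtain ⟨J, hJ⟩ := iha
    obtain ⟨J', hJ'⟩ := ihb
    refine ⟨J ∪ J', fun e h => ?_⟩
    rw [map_mul, hJ e (fun x hx => h x (Finset.mem_union_left _ hx)),
      hJ' e (fun x hx => h x (Finset.mem_union_right _ hx))]

theorem free_map_inj {X : Type} (c : FreeGroup X) (hc : c ≠ 1) : ∃ J : Finset X,
    ∀ (Y : Type) (f : X → Y), Set.InjOn f J → FreeGroup.map f c ≠ 1 := by
  classical
  obtain ⟨J, hJ⟩ := free_letters c
  refine ⟨J, fun Y f hf h1 => hc ?_⟩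
  by_cases hX : Nonempty X
  · have h2 := hJ (fun x => Function.invFunOn f J (f x)) (fun x hx => hf.leftInvOn_invFunOn hx)
    have h3 := FreeGroup.map.comp f (Function.invFunOn f J) c
    rw [h1, map_one] at h3
    rw [← h2]
    exact h3.symm
  · have : IsEmpty X := not_nonempty_iff.1 hX
    exact Subsingleton.elim _ _

/-- The action of a group on a free group coming from an action on the basis. -/
noncomputable def freeAct {G : Type} [Group G] (X : Type) [MulAction G X] :
    G →* MulAut (FreeGroup X) where
  toFun g := FreeGroup.freeGroupCongr (MulAction.toPerm g)
  map_one' := by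
    apply MulEquiv.toMonoidHom_injective
    ext x
    change FreeGroup.map _ _ = FreeGroup.of x
    rw [FreeGroup.map.of]
    simp
  map_mul' a b := by
    apply MulEquiv.toMonoidHom_injective
    ext x
    change FreeGroup.map (fun y => (a * b) • y) (FreeGroup.of x) =
      FreeGroup.map (fun y => a • y) (FreeGroup.map (fun y => b • y) (FreeGroup.of x))
    simp [mul_smul]

theorem freeAct_apply {G : Type} [Group G] {X : Type} [MulAction G X] (g : G) (c : FreeGroup X) :
    freeAct X g c = FreeGroup.map (fun x => g • x) c := rfl

theorem raag_rf_aux [Finite V] (Δ : Finset V) : ∀ g ∈ raagVertexSubgroup Γ (Δ : Set V),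
    (∀ H : Subgroup (RAAG Γ), H.FiniteIndex → g ∈ H) → g = 1 := by
  classical
  induction Δ using Finset.induction_on with
  | empty =>
    intro g hg _
    rw [Finset.coe_empty] at hg
    rw [← ret_of_mem hg, ret_empty]
  | insert v Δ hv ih =>
    intro g hg hall
    by_contra hg1
    set S : Set V := (Δ : Set V) with hS
    have hvS : v ∉ S := hv
    set ρ := ret Γ S with hρ
    have hρρ : ∀ a, ρ (ρ a) = ρ a := fun a => ret_of_mem (ret_mem S a)
    have hρg : ρ g = 1 := by
      apply ih _ (ret_mem S g)
      intro H hH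
      exact hall (H.comap ρ) inferInstance
    set L := raagVertexSubgroup Γ (lk Γ v ∩ S) with hL
    set L' := L.comap ρ with hL'
    let X := RAAG Γ ⧸ L'
    let y₀ : X := QuotientGroup.mk (1 : RAAG Γ)
    have hfix : ∀ w, Γ.Adj v w → ρ (gen Γ w) • y₀ = y₀ := by
      intro w hw
      change (QuotientGroup.mk (ρ (gen Γ w) * 1) : X) = QuotientGroup.mk 1
      symm
      apply QuotientGroup.eq.2
      rw [inv_one, one_mul, mul_one, hL', Subgroup.mem_comap, hρρ]
      by_cases hwS : w ∈ S
      · rw [hρ, ret_gen_mem hwS]; exact gen_mem ⟨hw, hwS⟩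
      · rw [hρ, ret_gen_not hwS]; exact one_mem _
    let α : RAAG Γ →* MulAut (FreeGroup X) := (freeAct X).comp ρ
    have hα : ∀ a c, α a c = FreeGroup.map (fun x => ρ a • x) c := fun a c => rfl
    obtain ⟨D, hD, hDg⟩ := exists_cocycle α (fun w => if w = v then FreeGroup.of y₀ else 1) (by
      intro a b hab
      by_cases ha : a = v
      · subst ha
        have hb : b ≠ a := hab.ne.symm
        rw [if_pos rfl, if_neg hb, map_one, mul_one, one_mul, hα, FreeGroup.map.of, hfix b hab]
      · by_cases hb : b = v
        · subst hb
          rw [if_pos rfl, if_neg ha, map_one, mul_one, one_mul, hα, FreeGroup.map.of,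
            hfix a hab.symm]
        · rw [if_neg ha, if_neg hb, map_one, map_one])
    have hLc : ∀ l ∈ L, l * gen Γ v * l⁻¹ = gen Γ v := by
      intro l hl
      have := lk_comm (vs_mono Set.inter_subset_left hl : l ∈ raagVertexSubgroup Γ (lk Γ v))
      rw [← this.eq, mul_inv_cancel_right]
    let Ψ : FreeGroup X →* RAAG Γ := FreeGroup.lift
      (fun q : X => ρ q.out * gen Γ v * (ρ q.out)⁻¹)
    have hΨ : ∀ a, Ψ (FreeGroup.of (QuotientGroup.mk a)) = ρ a * gen Γ v * (ρ a)⁻¹ := by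
      intro a
      simp only [Ψ]
      rw [FreeGroup.lift_apply_of]
      have h1 : a⁻¹ * (QuotientGroup.mk a : X).out ∈ L' := by
        apply QuotientGroup.eq.1
        exact (QuotientGroup.out_eq' _).symm
      have h2 := hLc _ h1
      rw [map_mul, map_inv] at h2
      calc _ = ρ a * (((ρ a)⁻¹ * ρ (QuotientGroup.mk a : X).out) * gen Γ v *
            ((ρ a)⁻¹ * ρ (QuotientGroup.mk a : X).out)⁻¹) * (ρ a)⁻¹ := by group
        _ = _ := by rw [h2]
    have hΨα : ∀ a c, Ψ (α a c) = ρ a * Ψ c * (ρ a)⁻¹ := by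
      intro a c
      have : Ψ.comp (α a).toMonoidHom = (MulAut.conj (ρ a)).toMonoidHom.comp Ψ := by
        ext q
        obtain ⟨b, rfl⟩ := QuotientGroup.mk_surjective q
        change Ψ (FreeGroup.of (QuotientGroup.mk (ρ a * b))) =
          ρ a * Ψ (FreeGroup.of (QuotientGroup.mk b)) * (ρ a)⁻¹
        rw [hΨ, hΨ, map_mul, hρρ]
        group
      exact DFunLike.congr_fun this c
    have hD1 : D 1 = 1 := by
      have := hD 1 1
      simpa using this
    have hΨD : Ψ (D g) * ρ g = g := by
      refine sub_ind (p := fun g => Ψ (D g) * ρ g = g) ?_ ?_ ?_ ?_ hg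
      · rw [hD1]; simp
      · intro w hw
        rw [hDg]
        by_cases hwv : w = v
        · subst hwv
          rw [if_pos rfl, hΨ, hρ, ret_gen_not hvS]; simp
        · rw [if_neg hwv, hρ, ret_gen_mem]
          · simp
          · rcases Finset.mem_insert.1 (Finset.mem_coe.1 hw) with h | h
            · exact absurd h hwv
            · exact h
      · intro a b ha hb
        rw [hD, map_mul, map_mul, hΨα]
        calc _ = (Ψ (D a) * ρ a) * (Ψ (D b) * ρ b) := by group
          _ = _ := by rw [ha, hb]
      · intro a ha
        have h0 := hD a⁻¹ a
        rw [inv_mul_cancel, hD1] at h0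
        have h1 := congrArg Ψ h0
        rw [map_one, map_mul, hΨα, map_inv, inv_inv] at h1
        have h2 : Ψ (D a⁻¹) = ((ρ a)⁻¹ * Ψ (D a) * ρ a)⁻¹ := eq_inv_of_mul_eq_one_left h1.symm
        rw [h2, map_inv]
        calc _ = (Ψ (D a) * ρ a)⁻¹ := by group
          _ = _ := by rw [ha]
    have hDne : D g ≠ 1 := by
      intro h
      rw [h, hρg] at hΨD
      exact hg1 (by simpa using hΨD.symm)
    obtain ⟨J, hJ⟩ := free_map_inj (D g) hDne
    have hsep : ∀ i j : X, ∃ M : Subgroup (RAAG Γ), M.Normal ∧ M.FiniteIndex ∧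
        (i ≠ j → i.out⁻¹ * j.out ∉ L' ⊔ M) := by
      intro i j
      by_cases hij : i = j
      · exact ⟨⊤, inferInstance, inferInstance, fun h => absurd hij h⟩
      set a := i.out⁻¹ * j.out with ha
      have haL : a ∉ L' := by
        intro h
        apply hij
        have := QuotientGroup.eq.2 h
        simpa using this
      set r := ret Γ (lk Γ v ∩ S) with hr
      have hrρ : ∀ b, r (ρ b) = r b := by
        intro b
        rw [hr, hρ, ret_ret, Set.inter_assoc, Set.inter_self]
      have h1 : ρ a * (r a)⁻¹ ≠ 1 := by
        intro h
        apply haL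
        rw [hL', Subgroup.mem_comap, mul_inv_eq_one.1 h]
        exact ret_mem _ _
      have h2 : ρ a * (r a)⁻¹ ∈ raagVertexSubgroup Γ S :=
        mul_mem (ret_mem _ _) (inv_mem (vs_mono Set.inter_subset_right (ret_mem _ _)))
      have h3 : ∃ H : Subgroup (RAAG Γ), H.FiniteIndex ∧ ρ a * (r a)⁻¹ ∉ H := by
        by_contra hcon
        push Not at hcon
        exact h1 (ih _ h2 hcon)
      obtain ⟨H, hHf, hH⟩ := h3
      refine ⟨H.normalCore.comap ρ ⊓ H.normalCore.comap r, inferInstance, inferInstance, ?_⟩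
      intro _ hmem
      rw [Subgroup.mem_sup_of_normal_right] at hmem
      obtain ⟨l, hl, m, hm, e⟩ := hmem
      apply hH
      apply H.normalCore_le
      have hrl : r l = ρ l := by
        rw [← hrρ]
        exact ret_of_mem hl
      rw [← e, map_mul, map_mul, hrl]
      have : ρ l * ρ m * (ρ l * r m)⁻¹ = ρ l * (ρ m * (r m)⁻¹) * (ρ l)⁻¹ := by group
      rw [this]
      exact (inferInstance : H.normalCore.Normal).conj_mem _ (mul_mem hm.1 (inv_mem hm.2)) _
    choose M hMn hMf hM using hsep
    let M' : Subgroup (RAAG Γ) := ⨅ p : J × J, M p.1.1 p.2.1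
    have hM'f : M'.FiniteIndex := Subgroup.finiteIndex_iInf fun p => hMf _ _
    have hM'n : M'.Normal := Subgroup.normal_iInf_normal fun p => hMn _ _
    let Y := RAAG Γ ⧸ (L' ⊔ M')
    have : (L' ⊔ M').FiniteIndex := Subgroup.finiteIndex_of_le le_sup_right
    have hYf : Finite Y := inferInstance
    let f : X → Y := fun q => QuotientGroup.mk q.out
    have hfmk : ∀ a, f (QuotientGroup.mk a) = QuotientGroup.mk a := by
      intro a
      apply QuotientGroup.eq.2
      refine Subgroup.mem_sup_left (QuotientGroup.eq.1 ?_)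
      exact QuotientGroup.out_eq' _
    have hfinj : Set.InjOn f J := by
      intro i hi j hj e
      by_contra hij
      have h1 : i.out⁻¹ * j.out ∈ L' ⊔ M' := QuotientGroup.eq.1 e
      refine hM i j hij ((sup_le_sup_left (?_ : M' ≤ M i j) L') h1)
      exact iInf_le (fun p : J × J => M p.1.1 p.2.1) (⟨i, hi⟩, ⟨j, hj⟩)
    have hne := hJ Y f hfinj
    obtain ⟨B₀, hB₀f, hB₀⟩ := free_rf _ hne
    have : Group.FG (FreeGroup Y) := inferInstance
    obtain ⟨B, hBc, hBf, hBle⟩ := exists_char B₀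
    have heq : ∀ a c, FreeGroup.map f (α a c) = freeAct Y (ρ a) (FreeGroup.map f c) := by
      intro a c
      have : (FreeGroup.map f).comp (α a).toMonoidHom =
          (freeAct Y (ρ a)).toMonoidHom.comp (FreeGroup.map f) := by
        ext q
        obtain ⟨b, rfl⟩ := QuotientGroup.mk_surjective q
        change FreeGroup.map f (FreeGroup.of (QuotientGroup.mk (ρ a * b))) =
          FreeGroup.map _ (FreeGroup.map f (FreeGroup.of (QuotientGroup.mk b)))
        rw [FreeGroup.map.of, FreeGroup.map.of, FreeGroup.map.of, hfmk, hfmk]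
        rfl
      exact DFunLike.congr_fun this c
    obtain ⟨H, hHf, hH⟩ := cocycle_finiteIndex α D hD (B.comap (FreeGroup.map f)) (by
      intro a b hb
      rw [Subgroup.mem_comap, heq]
      have := Subgroup.characteristic_iff_le_comap.1 hBc (freeAct Y (ρ a))
      exact this hb)
    have := (hH g).1 (hall H hHf)
    exact hB₀ (hBle this)

theorem raag_rf [Finite V] {g : RAAG Γ}
    (h : ∀ H : Subgroup (RAAG Γ), H.Normal → H.FiniteIndex → g ∈ H) : g = 1 := by
  have := Fintype.ofFinite V
  refine raag_rf_aux Finset.univ g ?_ ?_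
  · rw [Finset.coe_univ]; exact vs_univ g
  · intro H hH
    exact H.normalCore_le (h H.normalCore inferInstance inferInstance)

/-! ### Profinite limits -/

/-- `g` is a limit of `u` along `𝓤` in the profinite topology. -/
def Near {ι : Type} {G : Type} [Group G] (𝓤 : Filter ι) (u : ι → G) (g : G) : Prop :=
  ∀ M : Subgroup G, M.Normal → M.FiniteIndex → ∀ᶠ i in 𝓤, g⁻¹ * u i ∈ M

theorem Near.mul {ι G : Type} [Group G] {𝓤 : Filter ι} {u v : ι → G} {g h : G}
    (hu : Near 𝓤 u g) (hv : Near 𝓤 v h) : Near 𝓤 (fun i => u i * v i) (g * h) := by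
  intro M hM hf
  filter_upwards [hu M hM hf, hv M hM hf] with i a b
  have : (g * h)⁻¹ * (u i * v i) = (h⁻¹ * (g⁻¹ * u i) * h⁻¹⁻¹) * (h⁻¹ * v i) := by group
  rw [this]
  exact mul_mem (hM.conj_mem _ a _) b

theorem Near.inv {ι G : Type} [Group G] {𝓤 : Filter ι} {u : ι → G} {g : G}
    (hu : Near 𝓤 u g) : Near 𝓤 (fun i => (u i)⁻¹) g⁻¹ := by
  intro M hM hf
  filter_upwards [hu M hM hf] with i a
  have : g⁻¹⁻¹ * (u i)⁻¹ = g * (g⁻¹ * u i)⁻¹ * g⁻¹ := by group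
  rw [this]
  exact hM.conj_mem _ (inv_mem a) _

theorem Near.const {ι G : Type} [Group G] {𝓤 : Filter ι} (g : G) : Near 𝓤 (fun _ => g) g := by
  intro M hM hf
  simp [one_mem]

theorem Near.map {ι G H : Type} [Group G] [Group H] {𝓤 : Filter ι} {u : ι → G} {g : G}
    (hu : Near 𝓤 u g) (F : G →* H) : Near 𝓤 (fun i => F (u i)) (F g) := by
  intro M hM hf
  filter_upwards [hu (M.comap F) inferInstance inferInstance] with i a
  rw [Subgroup.mem_comap, map_mul, map_inv] at a
  exact a

theorem Near.unique [Finite V] {ι : Type} {𝓤 : Filter ι} [𝓤.NeBot] {u : ι → RAAG Γ} {g h : RAAG Γ}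
    (hg : Near 𝓤 u g) (hh : Near 𝓤 u h) : g = h := by
  rw [← inv_mul_eq_one]
  apply raag_rf
  intro M hM hf
  obtain ⟨i, a, b⟩ := ((hg M hM hf).and (hh M hM hf)).exists
  have : g⁻¹ * h = (g⁻¹ * u i) * (h⁻¹ * u i)⁻¹ := by group
  rw [this]
  exact mul_mem a (inv_mem b)

theorem eventually_exists_finset {ι β : Type} (𝓤 : Ultrafilter ι) (J : Finset β)
    (p : β → ι → Prop) (h : ∀ᶠ i in 𝓤, ∃ b ∈ J, p b i) : ∃ b ∈ J, ∀ᶠ i in 𝓤, p b i := by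
  classical
  by_contra hcon
  push Not at hcon
  have h1 : ∀ b ∈ J, ∀ᶠ i in 𝓤, ¬ p b i := hcon
  have h2 := (Filter.eventually_all_finset J).2 h1
  obtain ⟨i, ⟨b, hb, hp⟩, h3⟩ := (h.and h2).exists
  exact h3 b hb hp

theorem near_step {v : V} {k : ℕ} (hk : 1 ≤ k) {l y : RAAG Γ}
    (hl : l ∈ raagVertexSubgroup Γ (lk Γ v)) : ∃ J : Finset (RAAG Γ),
    ∀ (M : Subgroup (RAAG Γ)), M.Normal → M.FiniteIndex →
      ∃ M' : Subgroup (RAAG Γ), M'.Normal ∧ M'.FiniteIndex ∧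
      ∀ u : RAAG Γ, y⁻¹ * (u * (gen Γ v ^ k * l) * u⁻¹) ∈ M' →
        ∃ h ∈ J, ∃ s ∈ raagVertexSubgroup Γ (st Γ v), (h * s)⁻¹ * u ∈ M := by
  obtain ⟨J, hJ⟩ := fox_support v y
  refine ⟨J, ?_⟩
  intro M hM hMf
  set L := raagVertexSubgroup Γ (lk Γ v) with hL
  set x := gen Γ v ^ k * l with hx
  obtain ⟨D, hD⟩ := exists_fox_quot v (L ⊔ M) le_sup_left (ZMod (k + 1))
  have : (L ⊔ M).FiniteIndex := Subgroup.finiteIndex_of_le le_sup_right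
  have : Finite (RAAG Γ ⧸ (L ⊔ M)) := inferInstance
  have : Finite (ZMod (k + 1)) := inferInstance
  have : Finite ((RAAG Γ ⧸ (L ⊔ M)) →₀ ZMod (k + 1)) :=
    Finite.of_injective _ DFunLike.coe_injective
  have : Finite (Multiplicative ((RAAG Γ ⧸ (L ⊔ M)) →₀ ZMod (k + 1))) := this
  obtain ⟨H, hHf, hH⟩ := cocycle_finiteIndex (actHom Γ (RAAG Γ ⧸ (L ⊔ M)) (ZMod (k + 1)))
    (fun g => Multiplicative.ofAdd (D g)) (by
      intro a b
      apply Multiplicative.toAdd.injective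
      exact hD.mul a b) ⊥ (by
      intro g b hb
      rw [Subgroup.mem_bot] at hb ⊢
      rw [hb, map_one])
  have hH0 : ∀ g ∈ H, D g = 0 := by
    intro g hg
    have := (hH g).1 hg
    rw [Subgroup.mem_bot] at this
    exact this
  refine ⟨H.normalCore ⊓ M, inferInstance, inferInstance, ?_⟩
  rintro u ⟨hm1, hm2⟩
  have e1 : u * x = (y * u) * (u⁻¹ * (y⁻¹ * (u * x * u⁻¹)) * u⁻¹⁻¹) := by group
  have hDe : D (u * x) = D (y * u) := by
    rw [e1, hD.mul, hH0 _ (H.normalCore_le ((inferInstance : H.normalCore.Normal).conj_mem _ hm1 _)),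
      mapDomain_zero, add_zero]
  obtain ⟨z, hz, t, ht⟩ := fox_key hk hD hl hDe
  obtain ⟨h, hhJ, hh⟩ := hJ _ _ _ _ hD z hz
  rw [hh] at ht
  have h1 : h⁻¹ * (y ^ t * u) ∈ L ⊔ M := quot_smul_eq ht.symm
  have h2 : (y ^ t * u)⁻¹ * (u * x ^ t) ∈ M := by
    apply QuotientGroup.eq.1
    have e2 : (QuotientGroup.mk y : RAAG Γ ⧸ M) = QuotientGroup.mk (u * x * u⁻¹) :=
      QuotientGroup.eq.2 hm2
    rw [QuotientGroup.mk_mul, QuotientGroup.mk_zpow, e2, ← QuotientGroup.mk_zpow, conj_zpow,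
      ← QuotientGroup.mk_mul, inv_mul_cancel_right]
  have h3 : h⁻¹ * (u * x ^ t) ∈ L ⊔ M := by
    have := mul_mem h1 (Subgroup.mem_sup_right (S := L) h2)
    have e : h⁻¹ * (y ^ t * u) * ((y ^ t * u)⁻¹ * (u * x ^ t)) = h⁻¹ * (u * x ^ t) := by group
    rwa [e] at this
  rw [Subgroup.mem_sup_of_normal_right] at h3
  obtain ⟨l', hl', m, hm, e⟩ := h3
  refine ⟨h, hhJ, l' * x ^ (-t), mul_mem (lk_le_st v hl') (zpow_mem (mul_mem
    (pow_mem (gen_mem_st v) k) (lk_le_st v hl)) _), ?_⟩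
  have e3 : (h * (l' * x ^ (-t)))⁻¹ * u = x ^ t * m * (x ^ t)⁻¹ := by
    have e4 : m = l'⁻¹ * (h⁻¹ * (u * x ^ t)) := by rw [← e]; group
    rw [e4]; group
  rw [e3]
  exact hM.conj_mem _ hm _

theorem near_uniform {ι : Type} {𝓤 : Ultrafilter ι} {u : ι → RAAG Γ} {v : V} {k : ℕ} (hk : 1 ≤ k)
    {l y : RAAG Γ} (hl : l ∈ raagVertexSubgroup Γ (lk Γ v))
    (h : Near 𝓤 (fun i => u i * (gen Γ v ^ k * l) * (u i)⁻¹) y) :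
    ∃ h : RAAG Γ, ∀ (M : Subgroup (RAAG Γ)), M.Normal → M.FiniteIndex →
      ∀ᶠ i in 𝓤, ∃ s ∈ raagVertexSubgroup Γ (st Γ v), (h * s)⁻¹ * u i ∈ M := by
  classical
  obtain ⟨J, hJ⟩ := near_step (y := y) hk hl
  by_contra hcon
  push Not at hcon
  choose M hMn hMf hM using hcon
  let M' : Subgroup (RAAG Γ) := ⨅ h : J, M h.1
  have hM'f : M'.FiniteIndex := Subgroup.finiteIndex_iInf fun p => hMf _
  have hM'n : M'.Normal := Subgroup.normal_iInf_normal fun p => hMn _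
  obtain ⟨M₁, h1, h2, h3⟩ := hJ M' hM'n hM'f
  have h4 : ∀ᶠ i in 𝓤, ∃ b ∈ J, ∃ s ∈ raagVertexSubgroup Γ (st Γ v), (b * s)⁻¹ * u i ∈ M' := by
    filter_upwards [h M₁ h1 h2] with i hi
    exact h3 _ hi
  obtain ⟨b, hb, h5⟩ := eventually_exists_finset 𝓤 J _ h4
  obtain ⟨i, ⟨s, hs, hs2⟩, h6⟩ := (h5.and (hM b)).exists
  exact h6 s hs (iInf_le (fun h : J => M h.1) ⟨b, hb⟩ hs2)

theorem near_st {ι : Type} {𝓤 : Ultrafilter ι} {u : ι → RAAG Γ} {v : V} {k : ℕ} (hk : 1 ≤ k)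
    {l y : RAAG Γ} (hl : l ∈ raagVertexSubgroup Γ (lk Γ v))
    (h : Near 𝓤 (fun i => u i * (gen Γ v ^ k * l) * (u i)⁻¹) y) :
    ∃ g, Near 𝓤 (fun i => u i * (ret Γ (st Γ v) (u i))⁻¹) g := by
  obtain ⟨h, hh⟩ := near_uniform hk hl h
  refine ⟨h * (ret Γ (st Γ v) h)⁻¹, ?_⟩
  intro M hM hMf
  filter_upwards [hh (M ⊓ M.comap (ret Γ (st Γ v))) inferInstance inferInstance] with i hi
  obtain ⟨s, hs, hm1, hm2⟩ := hi
  set m := (h * s)⁻¹ * u i with hm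
  set r := ret Γ (st Γ v) with hr
  have e : u i = h * s * m := by rw [hm]; group
  have e2 : r (u i) = r h * s * r m := by
    rw [e, map_mul, map_mul, hr, ret_of_mem hs]
  rw [e2, e]
  have e3 : (h * (r h)⁻¹)⁻¹ * (h * s * m * (r h * s * r m)⁻¹) =
    (r h * s) * (m * (r m)⁻¹) * (r h * s)⁻¹ := by group
  rw [e3]
  exact hM.conj_mem _ (mul_mem hm1 (inv_mem hm2)) _

theorem near_inter {ι : Type} {𝓤 : Filter ι} {u : ι → RAAG Γ} {S T : Set V} {g h : RAAG Γ}
    (hg : Near 𝓤 (fun i => u i * (ret Γ S (u i))⁻¹) g)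
    (hh : Near 𝓤 (fun i => u i * (ret Γ T (u i))⁻¹) h) :
    Near 𝓤 (fun i => u i * (ret Γ (S ∩ T) (u i))⁻¹) (g * ret Γ S h) := by
  have := hg.mul (hh.map (ret Γ S))
  convert this using 2 with i
  rw [map_mul, map_inv, ret_ret]
  group

/-- The vertices adjacent to all other vertices. -/
def cen (Γ : SimpleGraph V) : Set V := {z | ∀ v, z ∈ st Γ v}

theorem cen_comm {a : RAAG Γ} (ha : a ∈ raagVertexSubgroup Γ (cen Γ)) (g : RAAG Γ) :
    Commute g a := by
  refine gen_ind (p := fun g => Commute g a) (Commute.one_left _) ?_ (fun _ _ h1 h2 => h1.mul_left h2)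
    (fun _ h => h.inv_left) g
  intro v
  refine sub_ind (p := fun a => Commute (gen Γ v) a) (Commute.one_right _) ?_
    (fun _ _ h1 h2 => h1.mul_right h2) (fun _ h => h.inv_right) ha
  intro w hw
  rcases hw v with h | h
  · rw [h]
  · exact gen_comm h

instance cen_normal : (raagVertexSubgroup Γ (cen Γ)).Normal := by
  constructor
  intro a ha g
  rw [(cen_comm ha g).eq, mul_inv_cancel_right]
  exact ha

theorem st_eq_univ {v : V} (h : ¬ ∃ w, Γᶜ.Adj v w) : st Γ v = Set.univ := by
  ext w
  simp only [Set.mem_univ, iff_true]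
  by_contra hw
  apply h
  refine ⟨w, ?_⟩
  rw [SimpleGraph.compl_adj]
  refine ⟨?_, ?_⟩
  · rintro rfl; exact hw (Or.inl rfl)
  · intro e; exact hw (Or.inr e)

theorem conj_limit [Finite V] (N : Subgroup (RAAG Γ)) [hN : N.Normal] (hfg : N.FG)
    (hfull : IsFullSubgroup Γ N) {ι : Type} {𝓤 : Ultrafilter ι} {u : ι → RAAG Γ}
    (φ : RAAG Γ → RAAG Γ) (h : ∀ x ∈ N, Near 𝓤 (fun i => u i * x * (u i)⁻¹) (φ x)) :
    ∃ g, Near 𝓤 (fun i => u i * (ret Γ (cen Γ) (u i))⁻¹) g ∧ ∀ x ∈ N, φ x = g * x * g⁻¹ := by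
  classical
  have huniv : ∃ g, Near 𝓤 (fun i => u i * (ret Γ Set.univ (u i))⁻¹) g := by
    refine ⟨1, ?_⟩
    have : (fun i => u i * (ret Γ Set.univ (u i))⁻¹) = fun _ => 1 := by
      funext i
      rw [ret_of_mem (vs_univ _), mul_inv_cancel]
    rw [this]
    exact Near.const 1
  have hst : ∀ v, ∃ g, Near 𝓤 (fun i => u i * (ret Γ (st Γ v) (u i))⁻¹) g := by
    intro v
    by_cases hv : ∃ w, Γᶜ.Adj v w
    · obtain ⟨w, hw⟩ := hv
      have hf := finiteIndex_sup_lk N hfg (not_le_st N hfull hw)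
      obtain ⟨k, hk, -, hk2⟩ := Subgroup.exists_pow_mem_of_index_ne_zero hf.index_ne_zero (gen Γ v)
      rw [Subgroup.mem_sup_of_normal_left] at hk2
      obtain ⟨n, hn, l, hl, e⟩ := hk2
      have hx : gen Γ v ^ k * l⁻¹ = n := by rw [← e]; group
      have := h n hn
      rw [← hx] at this
      exact near_st hk (inv_mem hl) this
    · rw [st_eq_univ hv]; exact huniv
  have hF : ∀ F : Finset V,
      ∃ g, Near 𝓤 (fun i => u i * (ret Γ {z | ∀ v ∈ F, z ∈ st Γ v} (u i))⁻¹) g := by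
    intro F
    induction F using Finset.induction_on with
    | empty =>
      have : {z : V | ∀ v ∈ (∅ : Finset V), z ∈ st Γ v} = Set.univ := by ext; simp
      rw [this]; exact huniv
    | insert a F ha ih =>
      obtain ⟨g, hg⟩ := ih
      obtain ⟨g', hg'⟩ := hst a
      have : {z : V | ∀ v ∈ insert a F, z ∈ st Γ v} = st Γ a ∩ {z | ∀ v ∈ F, z ∈ st Γ v} := by
        ext; simp
      rw [this]
      exact ⟨_, near_inter hg' hg⟩
  have := Fintype.ofFinite V
  obtain ⟨g, hg⟩ := hF Finset.univ
  have e : {z : V | ∀ v ∈ Finset.univ, z ∈ st Γ v} = cen Γ := by ext; simp [cen]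
  rw [e] at hg
  refine ⟨g, hg, ?_⟩
  intro x hx
  refine Near.unique (h x hx) ?_
  have h2 := (hg.mul (Near.const x)).mul hg.inv
  convert h2 using 2 with i
  have hc := (cen_comm (ret_mem (cen Γ) (u i)) x).eq
  generalize ret Γ (cen Γ) (u i) = c at *
  calc u i * x * (u i)⁻¹ = u i * c⁻¹ * (c * x) * (u i)⁻¹ := by group
    _ = u i * c⁻¹ * x * (u i * c⁻¹)⁻¹ := by rw [← hc]; group

/-! ### The quotient by `N * Z` -/

theorem comm_sep {A : Type} [hA : Group A] [hfg : Group.FG A] (hc : ∀ a b : A, a * b = b * a) (a : A)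
    (h : ∀ H : Subgroup A, H.FiniteIndex → a ∈ H) : a = 1 := by
  classical
  let _ : CommGroup A := { hA with mul_comm := hc }
  have hfin : ∀ (B : Type) [AddGroup B] [Finite B] (f : Additive A →+ B), f (Additive.ofMul a) = 0 := by
    intro B _ _ f
    let f' : A →* Multiplicative B := AddMonoidHom.toMultiplicativeRight f
    have : Finite (Multiplicative B) := ‹Finite B›
    exact h f'.ker inferInstance
  obtain ⟨n, ι, _, p, hp, e, ⟨E⟩⟩ := AddCommGroup.equiv_free_prod_directSum_zmod (Additive A)
  have hz : E (Additive.ofMul a) = 0 := by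
    apply Prod.ext
    · ext i
      set c := (E (Additive.ofMul a)).1 i with hc
      have h1 := hfin (ZMod (c.natAbs + 1)) ((Int.castAddHom (ZMod (c.natAbs + 1))).comp
        ((Finsupp.applyAddHom i).comp ((AddMonoidHom.fst _ _).comp E.toAddMonoidHom)))
      change ((c : ℤ) : ZMod (c.natAbs + 1)) = 0 at h1
      rw [ZMod.intCast_zmod_eq_zero_iff_dvd] at h1
      change c = 0
      by_contra hne
      have := Int.natAbs_dvd_natAbs.2 h1
      have := Nat.le_of_dvd (Int.natAbs_pos.2 hne) this
      have h5 : ((c.natAbs + 1 : ℕ) : ℤ).natAbs = c.natAbs + 1 := Int.natAbs_natCast _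
      omega
    · refine DFinsupp.ext fun i => ?_
      have : NeZero (p i ^ e i) := ⟨pow_ne_zero _ (hp i).ne_zero⟩
      exact hfin (ZMod (p i ^ e i)) ((DFinsupp.evalAddMonoidHom i).comp
        ((AddMonoidHom.snd _ _).comp E.toAddMonoidHom))
  have : Additive.ofMul a = 0 := by
    apply E.injective
    rw [hz, map_zero]
  exact this

theorem virt_center_sep {Q : Type} [Group Q] [Group.FG Q] (hZ : (Subgroup.center Q).FiniteIndex)
    (a : Q) (h : ∀ H : Subgroup Q, H.FiniteIndex → a ∈ H) : a = 1 := by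
  have ha := h _ hZ
  have : Group.FG (Subgroup.center Q) := inferInstance
  have h1 : (⟨a, ha⟩ : Subgroup.center Q) = 1 := by
    apply comm_sep (fun x y => Subtype.ext ((Subgroup.mem_center_iff.1 x.2 y.1).symm))
    intro H hH
    have : (H.map (Subgroup.center Q).subtype).FiniteIndex := by
      constructor
      rw [Subgroup.index_map_subtype]
      exact mul_ne_zero hH.index_ne_zero hZ.index_ne_zero
    obtain ⟨b, hb, e⟩ := Subgroup.mem_map.1 (h _ this)
    have : b = ⟨a, ha⟩ := Subtype.ext e
    rwa [← this]
  exact congrArg Subtype.val h1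

instance raag_fg [Finite V] : Group.FG (RAAG Γ) := by
  rw [Group.fg_iff]
  exact ⟨Set.range (PresentedGroup.of (rels := raagRels Γ)), PresentedGroup.closure_range_of _,
    Set.finite_range _⟩

theorem mem_of_closure [Finite V] (N : Subgroup (RAAG Γ)) [hN : N.Normal] (hfg : N.FG)
    (hfull : IsFullSubgroup Γ N) (g : RAAG Γ)
    (hg : ∀ M : Subgroup (RAAG Γ), M.Normal → M.FiniteIndex →
      ∃ n ∈ N, ∃ z ∈ raagVertexSubgroup Γ (cen Γ), (n * z)⁻¹ * g ∈ M) :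
    g ∈ N ⊔ raagVertexSubgroup Γ (cen Γ) := by
  set K := N ⊔ raagVertexSubgroup Γ (cen Γ) with hK
  have hKn : K.Normal := inferInstance
  let π := QuotientGroup.mk' K
  have hπ : Function.Surjective π := QuotientGroup.mk'_surjective K
  have hC : ∀ v, (Subgroup.centralizer {π (gen Γ v)}).FiniteIndex := by
    intro v
    have h1 : ((Subgroup.centralizer {π (gen Γ v)}).comap π).FiniteIndex := by
      by_cases hv : ∃ w, Γᶜ.Adj v w
      · obtain ⟨w, hw⟩ := hv
        have hf := finiteIndex_sup_lk N hfg (not_le_st N hfull hw)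
        refine Subgroup.finiteIndex_of_le (H := N ⊔ raagVertexSubgroup Γ (lk Γ v)) (sup_le ?_ ?_)
        · intro n hn
          rw [Subgroup.mem_comap]
          have : π n = 1 := (QuotientGroup.eq_one_iff n).2 (Subgroup.mem_sup_left hn)
          rw [this]; exact one_mem _
        · intro l hl
          rw [Subgroup.mem_comap, Subgroup.mem_centralizer_singleton_iff, ← map_mul, ← map_mul,
            (lk_comm hl).eq]
      · have : π (gen Γ v) = 1 := by
          refine (QuotientGroup.eq_one_iff _).2 (Subgroup.mem_sup_right (gen_mem ?_))
          intro w
          have : w ∈ st Γ v := by rw [st_eq_univ hv]; trivial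
          rcases this with e | e
          · exact Or.inl e.symm
          · exact Or.inr (SimpleGraph.Adj.symm e)
        refine Subgroup.finiteIndex_of_le (H := ⊤) ?_
        intro x _
        rw [Subgroup.mem_comap, Subgroup.mem_centralizer_singleton_iff, this]; simp
    constructor
    rw [← Subgroup.index_comap_of_surjective _ hπ]
    exact h1.index_ne_zero
  have hI : (⨅ v, Subgroup.centralizer {π (gen Γ v)}).FiniteIndex := Subgroup.finiteIndex_iInf hC
  have hZ : (Subgroup.center (RAAG Γ ⧸ K)).FiniteIndex := by
    refine Subgroup.finiteIndex_of_le (H := ⨅ v, Subgroup.centralizer {π (gen Γ v)}) ?_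
    intro x hx
    rw [Subgroup.mem_iInf] at hx
    rw [Subgroup.mem_center_iff]
    intro y
    obtain ⟨b, rfl⟩ := hπ y
    refine gen_ind (p := fun b => Commute (π b) x) ?_ ?_ ?_ ?_ b
    · rw [map_one]; exact Commute.one_left _
    · intro v
      exact ((Subgroup.mem_centralizer_singleton_iff).1 (hx v)).symm
    · intro a b ha hb; rw [map_mul]; exact ha.mul_left hb
    · intro a ha; rw [map_inv]; exact ha.inv_left
  have : π g = 1 := by
    apply virt_center_sep hZ
    intro H hH
    apply H.normalCore_le
    obtain ⟨n, hn, z, hz, hm⟩ := hg (H.normalCore.comap π) inferInstance inferInstance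
    have h1 : π (n * z) = 1 := (QuotientGroup.eq_one_iff _).2
      (mul_mem (Subgroup.mem_sup_left hn) (Subgroup.mem_sup_right hz))
    rw [Subgroup.mem_comap, map_mul, map_inv, h1, inv_one, one_mul] at hm
    exact hm
  exact (QuotientGroup.eq_one_iff g).1 this

theorem inner_of_limit [Finite V] (N : Subgroup (RAAG Γ)) [hN : N.Normal] (hfg : N.FG)
    (hfull : IsFullSubgroup Γ N) {ι : Type} {𝓤 : Ultrafilter ι} {u : ι → RAAG Γ}
    (hu : ∀ i, u i ∈ N)
    (φ : RAAG Γ → RAAG Γ) (h : ∀ x ∈ N, Near 𝓤 (fun i => u i * x * (u i)⁻¹) (φ x)) :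
    ∃ n ∈ N, ∀ x ∈ N, φ x = n * x * n⁻¹ := by
  obtain ⟨g, hg, hφ⟩ := conj_limit N hfg hfull φ h
  have hmem : g ∈ N ⊔ raagVertexSubgroup Γ (cen Γ) := by
    apply mem_of_closure N hfg hfull
    intro M hM hf
    obtain ⟨i, hi⟩ := (hg M hM hf).exists
    refine ⟨u i, hu i, (ret Γ (cen Γ) (u i))⁻¹, inv_mem (ret_mem _ _), ?_⟩
    have e : (u i * (ret Γ (cen Γ) (u i))⁻¹)⁻¹ * g = (g⁻¹ * (u i * (ret Γ (cen Γ) (u i))⁻¹))⁻¹ := by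
      group
    rw [e]
    exact inv_mem hi
  rw [Subgroup.mem_sup_of_normal_left] at hmem
  obtain ⟨n, hn, z, hz, rfl⟩ := hmem
  refine ⟨n, hn, fun x hx => ?_⟩
  rw [hφ x hx, mul_assoc n z x, ← (cen_comm hz x).eq]
  group

/-! ### Final assembly -/

/-- The map on automorphism groups induced by a characteristic quotient. -/
noncomputable def autQuot {A : Type} [Group A] (C : Subgroup A) [hC : C.Characteristic] :
    MulAut A →* MulAut (A ⧸ C) where
  toFun e := QuotientGroup.congr C C e (Subgroup.characteristic_iff_map_eq.1 hC e)
  map_one' := by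
    ext q
    obtain ⟨a, rfl⟩ := QuotientGroup.mk_surjective q
    rfl
  map_mul' e f := by
    ext q
    obtain ⟨a, rfl⟩ := QuotientGroup.mk_surjective q
    rfl

theorem autQuot_mk {A : Type} [Group A] (C : Subgroup A) [hC : C.Characteristic] (e : MulAut A)
    (a : A) : autQuot C e (QuotientGroup.mk a) = QuotientGroup.mk (e a) := rfl

theorem out_rf_of {A : Type} [Group A]
    (h : ∀ φ : MulAut A, (∀ C : Subgroup A, C.Characteristic → C.FiniteIndex →
      ∃ u : A, ∀ x, (φ x)⁻¹ * (u * x * u⁻¹) ∈ C) → ∃ n : A, ∀ x, φ x = n * x * n⁻¹) :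
    ResiduallyFinite (OutAut A) := by
  intro k hk
  obtain ⟨φ, rfl⟩ := QuotientGroup.mk_surjective k
  by_contra hcon
  apply hk
  obtain ⟨n, hn⟩ := h φ (by
    intro C hC hCf
    by_contra hu
    apply hcon
    have hfin : Finite (A ⧸ C) := inferInstance
    have hfin2 : Finite (MulAut (A ⧸ C)) :=
      Finite.of_injective (fun e : MulAut (A ⧸ C) => (e : A ⧸ C → A ⧸ C)) DFunLike.coe_injective
    refine ⟨OutAut (A ⧸ C), inferInstance, inferInstance,
      QuotientGroup.map _ _ (autQuot C) ?_, ?_⟩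
    · rintro _ ⟨a, rfl⟩
      refine ⟨QuotientGroup.mk a, ?_⟩
      ext q
      obtain ⟨b, rfl⟩ := QuotientGroup.mk_surjective q
      rfl
    · intro h1
      apply hu
      rw [QuotientGroup.map_mk, QuotientGroup.eq_one_iff] at h1
      obtain ⟨q, hq⟩ := h1
      obtain ⟨u, rfl⟩ := QuotientGroup.mk_surjective q
      refine ⟨u, fun x => ?_⟩
      apply QuotientGroup.eq.1
      have := DFunLike.congr_fun hq (QuotientGroup.mk x)
      rw [autQuot_mk] at this
      rw [← this]
      rfl)
  rw [QuotientGroup.eq_one_iff]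
  refine ⟨n, ?_⟩
  ext x
  rw [hn x]
  rfl

theorem main_thm [Finite V] (N : Subgroup (RAAG Γ)) [hN : N.Normal]
    (hfg : N.FG) (hfull : IsFullSubgroup Γ N) : ResiduallyFinite (OutAut N) := by
  classical
  apply out_rf_of
  intro φ hφ
  have hNfg : Group.FG N := (Group.fg_iff_subgroup_fg N).2 hfg
  have hu : ∀ M : FiniteIndexNormalSubgroup (RAAG Γ), ∃ u : N, ∀ x : N,
      ((φ x : N) : RAAG Γ)⁻¹ * (u * x * (u : RAAG Γ)⁻¹) ∈ M.toSubgroup := by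
    intro M
    have : (M.toSubgroup.comap N.subtype).FiniteIndex := inferInstance
    obtain ⟨C, hC, hCf, hCle⟩ := exists_char (M.toSubgroup.comap N.subtype)
    obtain ⟨u, hu⟩ := hφ C hC hCf
    exact ⟨u, fun x => hCle (hu x)⟩
  choose u hu using hu
  have hne : Nonempty (FiniteIndexNormalSubgroup (RAAG Γ)) := ⟨⟨⊤, inferInstance, inferInstance⟩⟩
  let 𝓤 : Ultrafilter (FiniteIndexNormalSubgroup (RAAG Γ)) := Ultrafilter.of Filter.atBot
  have h𝓤 : (𝓤 : Filter (FiniteIndexNormalSubgroup (RAAG Γ))) ≤ Filter.atBot := Ultrafilter.of_le _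
  obtain ⟨n, hn, hn2⟩ := inner_of_limit N hfg hfull (𝓤 := 𝓤) (u := fun M => (u M : RAAG Γ))
    (fun M => (u M).2) (fun x => if hx : x ∈ N then (φ ⟨x, hx⟩ : N) else 1) (by
      intro x hx M hM hMf
      rw [dif_pos hx]
      have h1 := h𝓤 (Filter.eventually_le_atBot (⟨M, hM, hMf⟩ : FiniteIndexNormalSubgroup (RAAG Γ)))
      filter_upwards [h1] with M' hM'
      exact hM' (hu M' ⟨x, hx⟩))
  refine ⟨⟨n, hn⟩, fun x => Subtype.ext ?_⟩
  have := hn2 x.1 x.2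
  rw [dif_pos x.2] at this
  exact this

end RaagAux

theorem out_of_fg_full_normal_subgroup_of_RAAG_is_residually_finite
    {V : Type} [Fintype V] (Γ : SimpleGraph V)
    (N : Subgroup (RAAG Γ)) [N.Normal]
    (hfg : N.FG) (hfull : IsFullSubgroup Γ N) :
    ResiduallyFinite (OutAut ↥N) := by
  exact RaagAux.main_thm N hfg hfull
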